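/- arXiv:1103.5519 — 2 statements merged into one kernel-verified Lean document; each statement's English description precedes it below -/
import Mathlib

section
/- Let L be an odd unimodular lattice in dimension 37 having minimum norm at least 3. Then L has minimum norm 3 and kissing number 1184 if and only if σ(L) = 21. -/
open scoped RealInnerProductSpace

noncomputable section

/-- The norm `(x, x)` of a vector `x ∈ ℝⁿ` (squared Euclidean length). -/
def normOf {n : ℕ} (x : EuclideanSpace ℝ (Fin n)) : ℝ := ⟪x, x⟫

/-- The dual `L* = {x ∈ ℝⁿ : (x,y) ∈ ℤ for all y ∈ L}` of a set of vectors. -/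
def dualSet {n : ℕ} (L : Set (EuclideanSpace ℝ (Fin n))) : Set (EuclideanSpace ℝ (Fin n)) :=
  {x | ∀ y ∈ L, ∃ m : ℤ, ⟪x, y⟫ = (m : ℝ)}

/-- `L` is a unimodular lattice: `L = L*`. -/
def IsUnimodularLattice {n : ℕ} (L : Set (EuclideanSpace ℝ (Fin n))) : Prop :=
  L = dualSet L

/-- `L` is odd: some vector of `L` has odd (integral) norm. -/
def IsOddLattice {n : ℕ} (L : Set (EuclideanSpace ℝ (Fin n))) : Prop :=
  ∃ x ∈ L, ∃ m : ℤ, Odd m ∧ normOf x = (m : ℝ)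

/-- The even sublattice `L₀ = {x ∈ L : (x,x) even}`. -/
def evenSublattice {n : ℕ} (L : Set (EuclideanSpace ℝ (Fin n))) :
    Set (EuclideanSpace ℝ (Fin n)) :=
  {x | x ∈ L ∧ ∃ m : ℤ, normOf x = 2 * (m : ℝ)}

/-- The shadow `S(L) = L₀* \ L`. -/
def shadow {n : ℕ} (L : Set (EuclideanSpace ℝ (Fin n))) : Set (EuclideanSpace ℝ (Fin n)) :=
  dualSet (evenSublattice L) \ L

/-- `L` has minimum norm `r`: `r` is the least norm among nonzero vectors of `L`. -/
def HasMinNorm {n : ℕ} (L : Set (EuclideanSpace ℝ (Fin n))) (r : ℝ) : Prop :=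
  IsLeast {s : ℝ | ∃ x ∈ L, x ≠ 0 ∧ normOf x = s} r

/-- The shadow `S(L)` has minimum norm `r`. -/
def HasShadowMinNorm {n : ℕ} (L : Set (EuclideanSpace ℝ (Fin n))) (r : ℝ) : Prop :=
  IsLeast {s : ℝ | ∃ x ∈ shadow L, normOf x = s} r

/-- `σ(L) = r`, i.e. `4 · min(S(L)) = r`. -/
def HasSigma {n : ℕ} (L : Set (EuclideanSpace ℝ (Fin n))) (r : ℝ) : Prop :=
  ∃ s : ℝ, HasShadowMinNorm L s ∧ r = 4 * s

/-- The number of vectors of norm `r` in `L`; when `L` has minimum norm `r`,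
this is the kissing number of `L`. -/
def numVecsOfNorm {n : ℕ} (L : Set (EuclideanSpace ℝ (Fin n))) (r : ℝ) : ℕ :=
  Set.ncard {x ∈ L | normOf x = r}

/-!
The theta series of `L`, its translate by `T` and the theta series of the shadow transform under
`SL(2, ℤ)` like `θ₃³⁷, θ₄³⁷, θ₂³⁷`. By the Sturm bound for the level one form `(f₃ f₄ f₂)⁸`, such a
triple `(f₃, f₄, f₂)` is determined by the first four coefficients of `f₃` at `∞` and the leading
coefficient of `f₂`; here these are `1, 0, 0, A` and `r`, with `A` the number of vectors of norm `3`
in `L` and `r` the number of vectors of norm `5/4` in the shadow. Hence the theta series of `L` is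
an explicit polynomial in `θ₃` and `Δ₈ = θ₂⁴θ₄⁴/16`. Transforming it to the shadow, the number of
shadow vectors of norm `13/4` is `-59 r - 2 (A - 1184)`. As all counts are nonnegative, `A = 1184`
if and only if the shadow has no vectors of norm `5/4` or `13/4`, and in that case it has
`1036 * 2¹³ ≠ 0` vectors of norm `21/4`.
-/

open Asymptotics Filter UpperHalfPlane
open scoped Manifold MatrixGroups Topology

section AutomorphyFactor

lemma coe_modular_T_smul (τ : ℍ) : ((ModularGroup.T • τ : ℍ) : ℂ) = τ + 1 := by
  rw [modular_T_smul, coe_vadd, Complex.ofReal_one, add_comm]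

lemma coe_modular_T_inv_smul (τ : ℍ) : ((ModularGroup.T⁻¹ • τ : ℍ) : ℂ) = τ - 1 := by
  rw [eq_sub_iff_add_eq, ← coe_modular_T_smul, smul_inv_smul]

lemma coe_modular_S_smul (τ : ℍ) : ((ModularGroup.S • τ : ℍ) : ℂ) = -1 / τ := by
  rw [modular_S_smul, coe_mk, inv_neg, neg_div, one_div]

lemma im_modular_T_smul (τ : ℍ) : (ModularGroup.T • τ).im = τ.im := by
  rw [← coe_im, coe_modular_T_smul, Complex.add_im, Complex.one_im, add_zero, coe_im]

lemma tendsto_modular_T_smul_atImInfty :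
    Tendsto (fun τ : ℍ ↦ ModularGroup.T • τ) atImInfty atImInfty :=
  tendsto_comap_iff.2 (tendsto_comap.congr fun τ ↦ (im_modular_T_smul τ).symm)

lemma modular_S_smul_S_smul (τ : ℍ) : ModularGroup.S • ModularGroup.S • τ = τ := by
  ext
  have := τ.ne_zero
  rw [coe_modular_S_smul, coe_modular_S_smul]
  field_simp

lemma modular_T_smul_S_smul_T_smul (τ : ℍ) :
    ModularGroup.T • ModularGroup.S • ModularGroup.T • τ =
      ModularGroup.S • ModularGroup.T⁻¹ • ModularGroup.S • τ := by
  ext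
  have h₀ := τ.ne_zero
  have h₁ := (ModularGroup.T • τ).ne_zero
  have h₂ := (ModularGroup.T⁻¹ • ModularGroup.S • τ).ne_zero
  simp only [coe_modular_T_smul, coe_modular_S_smul, coe_modular_T_inv_smul] at h₁ h₂ ⊢
  rw [eq_div_iff h₂]
  field_simp
  ring

/-- The automorphy factor `(-iτ)^{1/2}` (principal branch) of weight `1/2` theta series under
`τ ↦ -1/τ`. -/
def thetaFactor (τ : ℍ) : ℂ := (-Complex.I * τ) ^ (1 / 2 : ℂ)

lemma neg_I_mul_coe_re (τ : ℍ) : (-Complex.I * (τ : ℂ)).re = τ.im := by simp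

lemma neg_I_mul_coe_ne_zero (τ : ℍ) : -Complex.I * (τ : ℂ) ≠ 0 :=
  mul_ne_zero (neg_ne_zero.2 Complex.I_ne_zero) τ.ne_zero

lemma abs_arg_neg_I_mul_coe_lt (τ : ℍ) : |(-Complex.I * (τ : ℂ)).arg| < Real.pi / 2 :=
  Complex.abs_arg_lt_pi_div_two_iff.2 (.inl (by rw [neg_I_mul_coe_re]; exact τ.im_pos))

lemma thetaFactor_sq (τ : ℍ) : thetaFactor τ ^ 2 = -Complex.I * τ := by
  rw [thetaFactor, one_div]
  exact Complex.cpow_ofNat_inv_pow _ 2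

lemma thetaFactor_ne_zero (τ : ℍ) : thetaFactor τ ≠ 0 := by
  rw [← pow_ne_zero_iff two_ne_zero, thetaFactor_sq]
  exact neg_I_mul_coe_ne_zero τ

lemma thetaFactor_S_smul (τ : ℍ) : thetaFactor (ModularGroup.S • τ) = (thetaFactor τ)⁻¹ := by
  have hτ := τ.ne_zero
  have harg : (-Complex.I * (τ : ℂ)).arg ≠ Real.pi := fun h ↦ by
    have := abs_arg_neg_I_mul_coe_lt τ
    rw [h, abs_of_pos Real.pi_pos] at this
    linarith [Real.pi_pos]
  rw [thetaFactor, thetaFactor, ← Complex.inv_cpow _ _ harg, coe_modular_S_smul]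
  congr 1
  field_simp
  rw [Complex.I_sq]

lemma thetaFactor_I : thetaFactor I = 1 := by
  simp [thetaFactor]

lemma mul_cpow_of_arg_add_arg_mem_Ioc {x y : ℂ} (hx : x ≠ 0) (hy : y ≠ 0)
    (h : x.arg + y.arg ∈ Set.Ioc (-Real.pi) Real.pi) (r : ℂ) : (x * y) ^ r = x ^ r * y ^ r := by
  rw [Complex.cpow_def_of_ne_zero (mul_ne_zero hx hy), Complex.cpow_def_of_ne_zero hx,
    Complex.cpow_def_of_ne_zero hy, Complex.log_mul hx hy h, add_mul, Complex.exp_add]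

lemma thetaFactor_T_inv_smul_S_smul_mul (τ : ℍ) :
    thetaFactor (ModularGroup.T⁻¹ • ModularGroup.S • τ) * thetaFactor τ =
      Complex.exp (Real.pi * Complex.I / 4) * thetaFactor (ModularGroup.T • τ) := by
  set ρ := ModularGroup.T⁻¹ • ModularGroup.S • τ with hρ
  have hmul : (-Complex.I * (ρ : ℂ)) * (-Complex.I * τ) =
      Complex.I * (-Complex.I * (ModularGroup.T • τ : ℍ)) := by
    have := τ.ne_zero
    rw [hρ, coe_modular_T_inv_smul, coe_modular_S_smul, coe_modular_T_smul]
    field_simp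
    ring
  have hI : Complex.I ^ (1 / 2 : ℂ) = Complex.exp (Real.pi * Complex.I / 4) := by
    rw [Complex.cpow_def_of_ne_zero Complex.I_ne_zero, Complex.log_I]
    ring_nf
  have hargρ := abs_lt.1 (abs_arg_neg_I_mul_coe_lt ρ)
  have hargτ := abs_lt.1 (abs_arg_neg_I_mul_coe_lt τ)
  have hargT := abs_lt.1 (abs_arg_neg_I_mul_coe_lt (ModularGroup.T • τ))
  rw [thetaFactor, thetaFactor, thetaFactor, ← hI,
    ← mul_cpow_of_arg_add_arg_mem_Ioc (neg_I_mul_coe_ne_zero _) (neg_I_mul_coe_ne_zero _),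
    ← mul_cpow_of_arg_add_arg_mem_Ioc Complex.I_ne_zero (neg_I_mul_coe_ne_zero _), hmul]
  · rw [Complex.arg_I]
    constructor <;> linarith [hargT.1, hargT.2]
  · constructor <;> linarith [hargρ.1, hargρ.2, hargτ.1, hargτ.2]

lemma exp_pi_mul_I_div_four_pow_four : Complex.exp (Real.pi * Complex.I / 4) ^ 4 = -1 := by
  rw [← Complex.exp_nat_mul, ← Complex.exp_pi_mul_I]
  congr 1
  push_cast
  ring

end AutomorphyFactor

/-- A triple of holomorphic functions transforming under `τ ↦ τ + 1` and `τ ↦ -1/τ` like the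
`n`-th powers of the Jacobi theta constants `θ₃, θ₄, θ₂`. It is the vector-valued modular form
behind a function of weight `n/2` on the theta group. -/
structure IsThetaTriple (n : ℕ) (f₃ f₄ f₂ : ℍ → ℂ) : Prop where
  mdiff₃ : MDiff f₃
  mdiff₄ : MDiff f₄
  mdiff₂ : MDiff f₂
  T₃ : ∀ τ, f₃ (ModularGroup.T • τ) = f₄ τ
  T₄ : ∀ τ, f₄ (ModularGroup.T • τ) = f₃ τ
  S₃ : ∀ τ, f₃ (ModularGroup.S • τ) = thetaFactor τ ^ n * f₃ τ
  S₄ : ∀ τ, f₄ (ModularGroup.S • τ) = thetaFactor τ ^ n * f₂ τ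

namespace IsThetaTriple

variable {n m : ℕ} {f₃ f₄ f₂ g₃ g₄ g₂ : ℍ → ℂ}

lemma S₂ (hf : IsThetaTriple n f₃ f₄ f₂) (τ : ℍ) :
    f₂ (ModularGroup.S • τ) = thetaFactor τ ^ n * f₄ τ := by
  have h := hf.S₄ (ModularGroup.S • τ)
  rw [modular_S_smul_S_smul, thetaFactor_S_smul, inv_pow] at h
  rw [h, mul_inv_cancel_left₀ (pow_ne_zero n (thetaFactor_ne_zero τ))]

-- Apply `f₃` to the relation `T S T = S T⁻¹ S`.
lemma T₂ (hf : IsThetaTriple n f₃ f₄ f₂) (τ : ℍ) :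
    f₂ (ModularGroup.T • τ) = Complex.exp (Real.pi * Complex.I / 4) ^ n * f₂ τ := by
  set ρ := ModularGroup.T⁻¹ • ModularGroup.S • τ with hρ
  have hfρ : f₃ ρ = thetaFactor τ ^ n * f₂ τ := by
    rw [← hf.T₄ ρ, hρ, smul_inv_smul, hf.S₄]
  have h : thetaFactor (ModularGroup.T • τ) ^ n * f₂ (ModularGroup.T • τ) =
      thetaFactor ρ ^ n * f₃ ρ := by
    rw [← hf.S₄, ← hf.T₃, modular_T_smul_S_smul_T_smul, hf.S₃]
  refine mul_left_cancel₀ (pow_ne_zero n (thetaFactor_ne_zero (ModularGroup.T • τ))) ?_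
  rw [h, hfρ, ← mul_assoc, ← mul_pow, thetaFactor_T_inv_smul_S_smul_mul, mul_pow]
  ring

lemma add (hf : IsThetaTriple n f₃ f₄ f₂) (hg : IsThetaTriple n g₃ g₄ g₂) :
    IsThetaTriple n (f₃ + g₃) (f₄ + g₄) (f₂ + g₂) where
  mdiff₃ := hf.mdiff₃.add hg.mdiff₃
  mdiff₄ := hf.mdiff₄.add hg.mdiff₄
  mdiff₂ := hf.mdiff₂.add hg.mdiff₂
  T₃ τ := by simp only [Pi.add_apply, hf.T₃, hg.T₃]
  T₄ τ := by simp only [Pi.add_apply, hf.T₄, hg.T₄]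
  S₃ τ := by simp only [Pi.add_apply, hf.S₃, hg.S₃, mul_add]
  S₄ τ := by simp only [Pi.add_apply, hf.S₄, hg.S₄, mul_add]

lemma const_smul (c : ℂ) (hf : IsThetaTriple n f₃ f₄ f₂) :
    IsThetaTriple n (c • f₃) (c • f₄) (c • f₂) where
  mdiff₃ := hf.mdiff₃.const_smul c
  mdiff₄ := hf.mdiff₄.const_smul c
  mdiff₂ := hf.mdiff₂.const_smul c
  T₃ τ := by simp only [Pi.smul_apply, hf.T₃]
  T₄ τ := by simp only [Pi.smul_apply, hf.T₄]
  S₃ τ := by simp only [Pi.smul_apply, hf.S₃, mul_smul_comm]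
  S₄ τ := by simp only [Pi.smul_apply, hf.S₄, mul_smul_comm]

lemma sub (hf : IsThetaTriple n f₃ f₄ f₂) (hg : IsThetaTriple n g₃ g₄ g₂) :
    IsThetaTriple n (f₃ - g₃) (f₄ - g₄) (f₂ - g₂) where
  mdiff₃ := hf.mdiff₃.sub hg.mdiff₃
  mdiff₄ := hf.mdiff₄.sub hg.mdiff₄
  mdiff₂ := hf.mdiff₂.sub hg.mdiff₂
  T₃ τ := by simp only [Pi.sub_apply, hf.T₃, hg.T₃]
  T₄ τ := by simp only [Pi.sub_apply, hf.T₄, hg.T₄]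
  S₃ τ := by simp only [Pi.sub_apply, hf.S₃, hg.S₃, mul_sub]
  S₄ τ := by simp only [Pi.sub_apply, hf.S₄, hg.S₄, mul_sub]

lemma mul (hf : IsThetaTriple n f₃ f₄ f₂) (hg : IsThetaTriple m g₃ g₄ g₂) :
    IsThetaTriple (n + m) (f₃ * g₃) (f₄ * g₄) (f₂ * g₂) where
  mdiff₃ := hf.mdiff₃.mul hg.mdiff₃
  mdiff₄ := hf.mdiff₄.mul hg.mdiff₄
  mdiff₂ := hf.mdiff₂.mul hg.mdiff₂
  T₃ τ := by simp only [Pi.mul_apply, hf.T₃, hg.T₃]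
  T₄ τ := by simp only [Pi.mul_apply, hf.T₄, hg.T₄]
  S₃ τ := by simp only [Pi.mul_apply, hf.S₃, hg.S₃]; ring
  S₄ τ := by simp only [Pi.mul_apply, hf.S₄, hg.S₄]; ring

lemma pow (hf : IsThetaTriple n f₃ f₄ f₂) (k : ℕ) :
    IsThetaTriple (n * k) (f₃ ^ k) (f₄ ^ k) (f₂ ^ k) where
  mdiff₃ := hf.mdiff₃.pow k
  mdiff₄ := hf.mdiff₄.pow k
  mdiff₂ := hf.mdiff₂.pow k
  T₃ τ := by simp only [Pi.pow_apply, hf.T₃]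
  T₄ τ := by simp only [Pi.pow_apply, hf.T₄]
  S₃ τ := by simp only [Pi.pow_apply, hf.S₃, mul_pow, pow_mul]
  S₄ τ := by simp only [Pi.pow_apply, hf.S₄, mul_pow, pow_mul]

lemma pow_four_mul_pow_four (hf : IsThetaTriple n f₃ f₄ f₂) (hn : Odd n) :
    IsThetaTriple (8 * n) (f₂ ^ 4 * f₄ ^ 4) (-(f₂ ^ 4 * f₃ ^ 4)) (-(f₃ ^ 4 * f₄ ^ 4)) := by
  have hT₂ (τ : ℍ) : f₂ (ModularGroup.T • τ) ^ 4 = -f₂ τ ^ 4 := by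
    rw [hf.T₂, mul_pow, pow_right_comm, exp_pi_mul_I_div_four_pow_four, hn.neg_one_pow,
      neg_one_mul]
  constructor
  · exact (hf.mdiff₂.pow 4).mul (hf.mdiff₄.pow 4)
  · exact ((hf.mdiff₂.pow 4).mul (hf.mdiff₃.pow 4)).neg
  · exact ((hf.mdiff₃.pow 4).mul (hf.mdiff₄.pow 4)).neg
  all_goals
    intro τ
    simp only [Pi.mul_apply, Pi.neg_apply, Pi.pow_apply, hT₂, hf.T₃, hf.T₄, hf.S₂, hf.S₃, hf.S₄]
    ring

end IsThetaTriple

section LevelOne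

open Function ModularForm ModularFormClass

lemma norm_qExpansion_coeff_le {f : ℍ → ℂ} {h t M : ℝ} (hh : 0 < h)
    (hper : Periodic (f ∘ ofComplex) h) (hf : MDiff f) (hbdd : IsBoundedAtImInfty f) (ht : 0 < t)
    (hM : ∀ τ : ℍ, τ.im = t → ‖f τ‖ ≤ M) (m : ℕ) :
    ‖(qExpansion h f).coeff m‖ ≤ Real.exp (2 * Real.pi * t / h * m) * M := by
  have hint (u : ℝ) : ‖1 / Periodic.qParam h (u + t * Complex.I) ^ m *
      f ⟨u + t * Complex.I, by simpa using ht⟩‖ ≤ Real.exp (2 * Real.pi * t / h * m) * M := by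
    have hexp : Real.exp (2 * Real.pi * t / h * m) =
        1 / Real.exp (-2 * Real.pi * t / h) ^ m := by
      rw [← Real.exp_nat_mul, one_div, ← Real.exp_neg]
      ring_nf
    rw [norm_mul, norm_div, norm_one, norm_pow, Periodic.norm_qParam, hexp]
    refine mul_le_mul ?_ (hM _ ?_) (norm_nonneg _) (by positivity)
    · simp
    · rw [← coe_im]
      simp
  rw [qExpansion_coeff_eq_intervalIntegral hh hper hf hbdd m ht, norm_mul, norm_div, norm_one,
    Complex.norm_of_nonneg hh.le, one_div, inv_mul_le_iff₀ hh, mul_comm h]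
  simpa [abs_of_pos hh] using
    intervalIntegral.norm_integral_le_of_norm_le_const (a := 0) (b := h) fun u _ ↦ hint u

lemma qExpansion_coeff_eq_zero_of_isBigO {f : ℍ → ℂ} {h c : ℝ} (hh : 0 < h)
    (hper : Periodic (f ∘ ofComplex) h) (hf : MDiff f) (hbdd : IsBoundedAtImInfty f)
    (hO : f =O[atImInfty] fun τ ↦ Real.exp (-(2 * Real.pi * c / h) * τ.im))
    {m : ℕ} (hm : m < c) : (qExpansion h f).coeff m = 0 := by
  obtain ⟨C, hC⟩ := hO.bound
  obtain ⟨A, hA⟩ := (atImInfty_mem _).1 hC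
  have hbound : ∀ᶠ t : ℝ in atTop,
      ‖(qExpansion h f).coeff m‖ ≤ C * Real.exp (-(2 * Real.pi * (c - m) / h) * t) := by
    filter_upwards [eventually_ge_atTop A, eventually_gt_atTop 0] with t htA ht
    refine (norm_qExpansion_coeff_le hh hper hf hbdd ht
      (M := C * Real.exp (-(2 * Real.pi * c / h) * t)) (fun τ hτ ↦ ?_) m).trans_eq ?_
    · simpa [hτ] using hA τ (hτ ▸ htA)
    · rw [mul_left_comm, ← Real.exp_add]
      ring_nf
  have hneg : -(2 * Real.pi * (c - m) / h) < 0 := by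
    have := sub_pos.2 hm
    have := Real.pi_pos
    rw [neg_lt_zero]
    positivity
  have hlim := (Real.tendsto_exp_atBot.comp
    (tendsto_id.const_mul_atTop_of_neg hneg)).const_mul C
  rw [mul_zero] at hlim
  exact norm_le_zero_iff.1 (ge_of_tendsto hlim hbound)

-- Sturm's bound, with the order of vanishing read off from the decay at `i∞`.
lemma modularForm_eq_zero_of_isBigO {k : ℕ} {f : ModularForm 𝒮ℒ k} {c : ℝ} (hc : k < 12 * c)
    (hO : f =O[atImInfty] fun τ ↦ Real.exp (-(2 * Real.pi * c) * τ.im)) : f = 0 := by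
  refine sturm_bound_levelOne_nat (ENat.add_one_le_iff (ENat.natCast_ne_top _) |>.1 ?_)
  refine PowerSeries.nat_le_order _ (k / 12 + 1) fun m hm ↦ ?_
  have hmc : (m : ℝ) < c := by
    have : 12 * m ≤ k := by lia
    have : (12 * m : ℝ) ≤ k := mod_cast this
    linarith
  exact qExpansion_coeff_eq_zero_of_isBigO one_pos
    (SlashInvariantFormClass.periodic_comp_ofComplex f one_mem_strictPeriods_SL) f.holo'
    (ModularFormClass.bdd_at_infty f) (by simpa using hO) hmc

lemma exists_modularForm_coe_eq {k : ℤ} {f : ℍ → ℂ} (hf : MDiff f)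
    (hbdd : IsBoundedAtImInfty f) (hT : ∀ τ, f (ModularGroup.T • τ) = f τ)
    (hS : ∀ τ, f (ModularGroup.S • τ) = (τ : ℂ) ^ k * f τ) :
    ∃ F : ModularForm 𝒮ℒ k, ⇑F = f := by
  have hslash : ∀ γ : SL(2, ℤ), f ∣[k] γ = f := by
    refine SlashInvariantForm.slash_action_generators_SL2Z ?_ ?_ <;> ext τ <;> rw [SL_slash_apply]
    · rw [ModularGroup.denom_S, hS, mul_comm, ← mul_assoc, ← zpow_add₀ τ.ne_zero,
        neg_add_cancel, zpow_zero, one_mul]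
    · rw [hT]
      simp [denom, ModularGroup.coe_T]
  exact ⟨{
    toFun := f
    slash_action_eq' := fun _ ⟨γ, hγ⟩ ↦ hγ ▸ hslash γ
    holo' := hf
    bdd_at_cusps' {c} hc := by
      rw [Subgroup.IsArithmetic.isCusp_iff_isCusp_SL2Z] at hc
      rw [OnePoint.isBoundedAt_iff_forall_SL2Z hc]
      intro γ _
      rwa [hslash γ] }, rfl⟩

end LevelOne

lemma eq_zero_or_eq_zero_of_mul_eq_zero_of_mdifferentiable {f g : ℍ → ℂ} (hf : MDiff f)
    (hg : MDiff g) (hfg : f * g = 0) : f = 0 ∨ g = 0 := by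
  rw [UpperHalfPlane.mdifferentiable_iff] at hf hg
  have hopen : IsOpen {z : ℂ | 0 < z.im} := isOpen_lt continuous_const Complex.continuous_im
  have key := AnalyticOnNhd.eq_zero_or_eq_zero_of_mul_eq_zero (hf.analyticOnNhd hopen)
    (hg.analyticOnNhd hopen) (fun z _ ↦ congrFun hfg (ofComplex z))
    (convex_halfSpace_im_gt 0).isPreconnected
  refine key.imp ?_ ?_ <;>
  · intro h
    ext τ
    simpa using h τ τ.im_pos

namespace IsThetaTriple

variable {n : ℕ} {f₃ f₄ f₂ : ℍ → ℂ}

lemma isBigO₄ (hf : IsThetaTriple n f₃ f₄ f₂) {a : ℝ}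
    (h₃ : f₃ =O[atImInfty] fun τ ↦ Real.exp (-(Real.pi * a) * τ.im)) :
    f₄ =O[atImInfty] fun τ ↦ Real.exp (-(Real.pi * a) * τ.im) := by
  simpa only [Function.comp_def, hf.T₃, im_modular_T_smul] using
    h₃.comp_tendsto tendsto_modular_T_smul_atImInfty

lemma pow_eight_T_smul (hf : IsThetaTriple n f₃ f₄ f₂) (τ : ℍ) :
    ((f₃ * f₄ * f₂) ^ 8) (ModularGroup.T • τ) = ((f₃ * f₄ * f₂) ^ 8) τ := by
  have hζ : (Complex.exp (Real.pi * Complex.I / 4) ^ n) ^ 8 = 1 := by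
    rw [pow_right_comm, show 8 = 4 * 2 from rfl, pow_mul, exp_pi_mul_I_div_four_pow_four,
      neg_one_sq, one_pow]
  simp only [Pi.pow_apply, Pi.mul_apply, hf.T₃, hf.T₄, hf.T₂, mul_pow, hζ]
  ring

lemma pow_eight_S_smul (hf : IsThetaTriple n f₃ f₄ f₂) (τ : ℍ) :
    ((f₃ * f₄ * f₂) ^ 8) (ModularGroup.S • τ) =
      (τ : ℂ) ^ ((12 * n : ℕ) : ℤ) * ((f₃ * f₄ * f₂) ^ 8) τ := by
  have hj : (thetaFactor τ ^ n) ^ 24 = (τ : ℂ) ^ (12 * n) := by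
    rw [pow_right_comm, show 24 = 2 * 12 from rfl, pow_mul, thetaFactor_sq, mul_pow, pow_mul,
      show (-Complex.I) ^ 12 = 1 by rw [show 12 = 4 * 3 from rfl, pow_mul]; norm_num, one_mul]
  simp only [Pi.pow_apply, Pi.mul_apply, hf.S₃, hf.S₄, hf.S₂, zpow_natCast, ← hj]
  ring

lemma eq_zero_of_mul_mul_eq_zero (hf : IsThetaTriple n f₃ f₄ f₂) (h : f₃ * f₄ * f₂ = 0) :
    f₂ = 0 := by
  have h₂_of_h₄ (h₄ : f₄ = 0) : f₂ = 0 := by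
    ext τ
    have := hf.S₄ τ
    simpa [h₄, thetaFactor_ne_zero] using this
  rcases eq_zero_or_eq_zero_of_mul_eq_zero_of_mdifferentiable (hf.mdiff₃.mul hf.mdiff₄)
    hf.mdiff₂ h with h₃₄ | h₂
  · refine h₂_of_h₄ ?_
    rcases eq_zero_or_eq_zero_of_mul_eq_zero_of_mdifferentiable hf.mdiff₃ hf.mdiff₄ h₃₄ with
      h₃ | h₄
    · ext τ
      rw [← hf.T₃, h₃, Pi.zero_apply, Pi.zero_apply]
    · exact h₄
  · exact h₂

-- `(f₃ f₄ f₂)⁸` is a level one modular form of weight `12 n` vanishing to order `4 (2 a + b)`.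
lemma eq_zero_of_isBigO (hf : IsThetaTriple n f₃ f₄ f₂) {a b : ℝ} (hab : n < 4 * (2 * a + b))
    (h₃ : f₃ =O[atImInfty] fun τ ↦ Real.exp (-(Real.pi * a) * τ.im))
    (h₂ : f₂ =O[atImInfty] fun τ ↦ Real.exp (-(Real.pi * b) * τ.im)) : f₂ = 0 := by
  have hO : ((f₃ * f₄ * f₂) ^ 8) =O[atImInfty]
      fun τ ↦ Real.exp (-(2 * Real.pi * (4 * (2 * a + b))) * τ.im) := by
    refine (((h₃.mul (hf.isBigO₄ h₃)).mul h₂).pow 8).congr_right fun τ ↦ ?_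
    rw [← Real.exp_add, ← Real.exp_add, ← Real.exp_nat_mul]
    ring_nf
  have hbdd : IsBoundedAtImInfty ((f₃ * f₄ * f₂) ^ 8) := by
    refine hO.trans (IsBigO.of_norm_le fun τ ↦ ?_)
    have hc : 0 ≤ 4 * (2 * a + b) := n.cast_nonneg.trans hab.le
    have := τ.im_pos
    rw [Real.norm_of_nonneg (Real.exp_pos _).le, Pi.one_apply, Real.exp_le_one_iff,
      neg_mul, neg_nonpos]
    positivity
  obtain ⟨F, hF⟩ := exists_modularForm_coe_eq (((hf.mdiff₃.mul hf.mdiff₄).mul hf.mdiff₂).pow 8)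
    hbdd hf.pow_eight_T_smul hf.pow_eight_S_smul
  have hprod : f₃ * f₄ * f₂ = 0 := by
    have hF₀ := modularForm_eq_zero_of_isBigO (f := F) (c := 4 * (2 * a + b))
      (by push_cast; linarith) (hF ▸ hO)
    rw [hF₀, FunLike.coe_zero] at hF
    exact pow_eq_zero_iff (by norm_num) |>.1 hF.symm
  exact hf.eq_zero_of_mul_mul_eq_zero hprod

end IsThetaTriple

/-- The expansion `f = a + b x + c x² + d x³ + O(x⁴)` along the filter `l`, where the parameter `x`
is itself a function, usually tending to `0`. -/
def HasCubicExpansion {α 𝕜 : Type*} [NormedField 𝕜] (l : Filter α) (x f : α → 𝕜)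
    (a b c d : 𝕜) : Prop :=
  (fun t ↦ f t - (a + b * x t + c * x t ^ 2 + d * x t ^ 3)) =O[l] fun t ↦ x t ^ 4

namespace HasCubicExpansion

variable {α 𝕜 : Type*} [NormedField 𝕜] {l : Filter α} {x f g : α → 𝕜}
  {a b c d a' b' c' d' : 𝕜}

lemma one (l : Filter α) (x : α → 𝕜) : HasCubicExpansion l x 1 1 0 0 0 := by
  refine (isBigO_zero _ l).congr_left fun t ↦ ?_
  simp

lemma param (l : Filter α) (x : α → 𝕜) : HasCubicExpansion l x x 0 1 0 0 := by
  refine (isBigO_zero _ l).congr_left fun t ↦ ?_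
  simp

lemma add (hf : HasCubicExpansion l x f a b c d) (hg : HasCubicExpansion l x g a' b' c' d') :
    HasCubicExpansion l x (f + g) (a + a') (b + b') (c + c') (d + d') := by
  refine (IsBigO.add hf hg).congr_left fun t ↦ ?_
  simp only [Pi.add_apply]
  ring

lemma const_smul (k : 𝕜) (hf : HasCubicExpansion l x f a b c d) :
    HasCubicExpansion l x (k • f) (k * a) (k * b) (k * c) (k * d) := by
  refine (IsBigO.const_mul_left hf k).congr_left fun t ↦ ?_
  simp only [Pi.smul_apply, smul_eq_mul]
  ring

lemma sub (hf : HasCubicExpansion l x f a b c d) (hg : HasCubicExpansion l x g a' b' c' d') :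
    HasCubicExpansion l x (f - g) (a - a') (b - b') (c - c') (d - d') := by
  refine (IsBigO.sub hf hg).congr_left fun t ↦ ?_
  simp only [Pi.sub_apply]
  ring

lemma tendsto_polynomial (hx : Tendsto x l (𝓝 0)) (a b c d : 𝕜) :
    Tendsto (fun t ↦ a + b * x t + c * x t ^ 2 + d * x t ^ 3) l (𝓝 a) := by
  simpa using ((tendsto_const_nhds.add (hx.const_mul b)).add ((hx.pow 2).const_mul c)).add
    ((hx.pow 3).const_mul d)

lemma tendsto (hf : HasCubicExpansion l x f a b c d) (hx : Tendsto x l (𝓝 0)) :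
    Tendsto f l (𝓝 a) := by
  have h := (IsBigO.trans_tendsto hf (by simpa using hx.pow 4)).add
    (tendsto_polynomial hx a b c d)
  simpa using h

lemma isBigO_param (hx : Tendsto x l (𝓝 0)) (hf : HasCubicExpansion l x f 0 b c d) :
    f =O[l] x := by
  have hpoly := (isBigO_refl x l).mul ((tendsto_polynomial hx b c d 0).isBigO_one 𝕜)
  have hrem := (isBigO_refl x l).mul ((hx.pow 3).isBigO_one 𝕜)
  refine ((IsBigO.trans hf (hrem.congr_left fun t ↦ (pow_succ' (x t) 3).symm)).add
    hpoly).congr (fun t ↦ ?_) fun t ↦ mul_one _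
  ring

lemma mul (hx : Tendsto x l (𝓝 0)) (hf : HasCubicExpansion l x f a b c d)
    (hg : HasCubicExpansion l x g a' b' c' d') :
    HasCubicExpansion l x (f * g) (a * a') (a * b' + b * a') (a * c' + b * b' + c * a')
      (a * d' + b * c' + c * b' + d * a') := by
  have hpf := (tendsto_polynomial hx a b c d).isBigO_one 𝕜
  have hg₁ := (hg.tendsto hx).isBigO_one 𝕜
  have hrem := (tendsto_polynomial hx (b * d' + c * c' + d * b') (c * d' + d * c') (d * d')
    0).isBigO_one 𝕜
  refine (((IsBigO.mul hf hg₁).congr_right fun t ↦ mul_one _).add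
    ((hpf.mul hg).congr_right fun t ↦ one_mul _)).add
      ((hrem.mul (isBigO_refl (fun t ↦ x t ^ 4) l)).congr_right fun t ↦ one_mul _) |>.congr_left
        fun t ↦ ?_
  simp only [Pi.mul_apply]
  ring

lemma pow (hx : Tendsto x l (𝓝 0)) (hf : HasCubicExpansion l x f 1 b c d) (n : ℕ) :
    HasCubicExpansion l x (f ^ n) 1 (n * b) (n * c + n.choose 2 * b ^ 2)
      (n * d + 2 * n.choose 2 * b * c + n.choose 3 * b ^ 3) := by
  induction n with
  | zero => simpa using one l x
  | succ n ih =>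
    rw [pow_succ]
    convert ih.mul hx hf using 1
    · ring
    · push_cast
      ring
    · rw [Nat.choose_succ_succ' n 1, Nat.choose_one_right]
      push_cast
      ring
    · rw [Nat.choose_succ_succ' n 2, Nat.choose_succ_succ' n 1, Nat.choose_one_right]
      push_cast
      ring

lemma eq_zero_and_isBigO_of_isBigO_pow_succ [l.NeBot] (hx : Tendsto x l (𝓝 0))
    (hx₀ : ∀ᶠ t in l, x t ≠ 0) (hg : Tendsto g l (𝓝 b)) {k : ℕ}
    (h : (fun t ↦ a + x t * g t) =O[l] fun t ↦ x t ^ (k + 1)) :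
    a = 0 ∧ g =O[l] fun t ↦ x t ^ k := by
  have ha : a = 0 := by
    have hlim : Tendsto (fun t ↦ a + x t * g t) l (𝓝 a) := by
      simpa using (hx.mul hg).const_add a
    exact tendsto_nhds_unique hlim (h.trans_tendsto (by simpa using hx.pow (k + 1)))
  refine ⟨ha, ?_⟩
  refine (h.mul (isBigO_refl (fun t ↦ (x t)⁻¹) l)).congr' ?_ ?_ <;>
    filter_upwards [hx₀] with t ht
  · rw [ha, zero_add, mul_comm (x t), mul_inv_cancel_right₀ ht]
  · rw [pow_succ, mul_inv_cancel_right₀ ht]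

lemma unique [l.NeBot] (hx : Tendsto x l (𝓝 0)) (hx₀ : ∀ᶠ t in l, x t ≠ 0)
    (hf : HasCubicExpansion l x f a b c d) (hf' : HasCubicExpansion l x f a' b' c' d') :
    a = a' ∧ b = b' ∧ c = c' ∧ d = d' := by
  have h : (fun t ↦ (a' - a) + x t * ((b' - b) + x t * ((c' - c) + x t * (d' - d)))) =O[l]
      fun t ↦ x t ^ 4 := (IsBigO.sub hf hf').congr_left fun t ↦ by ring
  have hlim₂ : Tendsto (fun t ↦ (c' - c) + x t * (d' - d)) l (𝓝 (c' - c)) := by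
    simpa using (hx.mul_const (d' - d)).const_add (c' - c)
  have hlim₁ : Tendsto (fun t ↦ (b' - b) + x t * ((c' - c) + x t * (d' - d))) l
      (𝓝 (b' - b)) := by
    simpa using (hx.mul hlim₂).const_add (b' - b)
  obtain ⟨ha, h⟩ := eq_zero_and_isBigO_of_isBigO_pow_succ hx hx₀ hlim₁ h
  obtain ⟨hb, h⟩ := eq_zero_and_isBigO_of_isBigO_pow_succ hx hx₀ hlim₂ h
  obtain ⟨hc, h⟩ := eq_zero_and_isBigO_of_isBigO_pow_succ hx hx₀ tendsto_const_nhds h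
  have hd := tendsto_nhds_unique tendsto_const_nhds (h.trans_tendsto (by simpa using hx))
  exact ⟨(sub_eq_zero.1 ha).symm, (sub_eq_zero.1 hb).symm, (sub_eq_zero.1 hc).symm,
    (sub_eq_zero.1 hd).symm⟩

end HasCubicExpansion

/-- The theta series `∑ᵢ e^{πiτN(i)}` of a family `N` of nonnegative reals, such as the norms of
the vectors of a translated lattice. -/
def thetaSeries {ι : Type*} (N : ι → ℝ) (τ : ℍ) : ℂ :=
  ∑' i, Complex.exp (Real.pi * Complex.I * τ * N i)

/-- The conditions on a family of exponents under which its theta series converges locally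
uniformly on the upper half plane. -/
structure IsThetaExponent {ι : Type*} (N : ι → ℝ) : Prop where
  nonneg : ∀ i, 0 ≤ N i
  summable_exp : ∀ a : ℝ, 0 < a → Summable fun i ↦ Real.exp (-a * N i)

lemma norm_exp_pi_mul_I_mul (z : ℂ) (r : ℝ) :
    ‖Complex.exp (Real.pi * Complex.I * z * r)‖ = Real.exp (-(Real.pi * r) * z.im) := by
  rw [Complex.norm_exp]
  congr 1
  simp
  ring

namespace IsThetaExponent

variable {ι : Type*} {N : ι → ℝ}

lemma summable (hN : IsThetaExponent N) (τ : ℍ) :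
    Summable fun i ↦ Complex.exp (Real.pi * Complex.I * τ * N i) := by
  refine .of_norm ((hN.summable_exp (Real.pi * τ.im) (mul_pos Real.pi_pos τ.im_pos)).congr
    fun i ↦ ?_)
  rw [norm_exp_pi_mul_I_mul, coe_im]
  ring_nf

lemma mdifferentiable_thetaSeries (hN : IsThetaExponent N) : MDiff (thetaSeries N) := by
  rw [UpperHalfPlane.mdifferentiable_iff]
  have hdiff : DifferentiableOn ℂ
      (fun z : ℂ ↦ ∑' i, Complex.exp (Real.pi * Complex.I * z * N i)) {z | 0 < z.im} := by
    intro z (hz : 0 < z.im)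
    have hopen : IsOpen {w : ℂ | z.im / 2 < w.im} :=
      isOpen_lt continuous_const Complex.continuous_im
    refine (DifferentiableOn.differentiableAt ?_
      (hopen.mem_nhds (half_lt_self hz))).differentiableWithinAt
    refine Complex.differentiableOn_tsum_of_summable_norm
      (hN.summable_exp (Real.pi * (z.im / 2)) (by positivity)) (fun i ↦ by fun_prop) hopen
      fun i w (hw : z.im / 2 < w.im) ↦ ?_
    rw [norm_exp_pi_mul_I_mul, Real.exp_le_exp, neg_mul, neg_mul, neg_le_neg_iff, mul_right_comm]
    exact mul_le_mul_of_nonneg_left hw.le (mul_nonneg Real.pi_pos.le (hN.nonneg i))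
  refine hdiff.congr fun z hz ↦ ?_
  rw [Function.comp_apply, thetaSeries, ofComplex_apply_of_im_pos hz]

lemma thetaSeries_I_ne_zero [Nonempty ι] (hN : IsThetaExponent N) : thetaSeries N I ≠ 0 := by
  have hreal : thetaSeries N I = (∑' i, Real.exp (-Real.pi * N i) : ℝ) := by
    rw [thetaSeries, Complex.ofReal_tsum]
    refine tsum_congr fun i ↦ ?_
    rw [Complex.ofReal_exp, coe_I]
    congr 1
    push_cast
    linear_combination (Real.pi * N i : ℂ) * Complex.I_sq
  rw [hreal]
  exact mod_cast ((hN.summable_exp _ Real.pi_pos).tsum_pos (fun i ↦ (Real.exp_pos _).le)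
    (Classical.arbitrary ι) (Real.exp_pos _)).ne'

lemma finite_lt (hN : IsThetaExponent N) (M : ℝ) : {i | N i < M}.Finite := by
  have h := (hN.summable_exp 1 one_pos).tendsto_cofinite_zero.eventually
    (gt_mem_nhds (Real.exp_pos (-1 * M)))
  refine (eventually_cofinite.1 h).subset fun i (hi : N i < M) ↦ ?_
  simpa using hi.le

lemma finite_eq (hN : IsThetaExponent N) (v : ℝ) : {i | N i = v}.Finite :=
  (hN.finite_lt (v + 1)).subset fun i (hi : N i = v) ↦ hi.trans_lt (lt_add_one v)

lemma thetaSeries_sub_sum_isBigO (hN : IsThetaExponent N) {s : Finset ι} {M : ℝ}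
    (hM : ∀ i ∉ s, M ≤ N i) :
    (fun τ ↦ thetaSeries N τ - ∑ i ∈ s, Complex.exp (Real.pi * Complex.I * τ * N i))
      =O[atImInfty] fun τ ↦ Real.exp (-(Real.pi * M) * τ.im) := by
  set K := ∑' i : {i // i ∉ s}, Real.exp (Real.pi * M) * Real.exp (-Real.pi * N i)
  refine IsBigO.of_bound K ?_
  filter_upwards [tendsto_comap.eventually (eventually_ge_atTop 1)] with τ (hτ : 1 ≤ τ.im)
  have hterm (i : {i // i ∉ s}) : ‖Complex.exp (Real.pi * Complex.I * τ * N i)‖ ≤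
      Real.exp (Real.pi * M) * Real.exp (-Real.pi * N i) *
        Real.exp (-(Real.pi * M) * τ.im) := by
    rw [norm_exp_pi_mul_I_mul, coe_im, ← Real.exp_add, ← Real.exp_add, Real.exp_le_exp]
    have := mul_nonneg Real.pi_pos.le
      (mul_nonneg (sub_nonneg.2 (hM i i.2)) (sub_nonneg.2 hτ))
    linarith
  have hsum : Summable fun i : {i // i ∉ s} ↦
      Real.exp (Real.pi * M) * Real.exp (-Real.pi * N i) :=
    ((hN.summable_exp _ Real.pi_pos).subtype _).mul_left _
  rw [thetaSeries, ← (hN.summable τ).sum_add_tsum_subtype_compl s, add_sub_cancel_left,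
    Real.norm_of_nonneg (Real.exp_pos _).le, ← tsum_mul_right]
  exact tsum_of_norm_bounded (hsum.mul_right _).hasSum hterm

lemma thetaSeries_sub_sum_ncard_isBigO (hN : IsThetaExponent N) {V : Finset ℝ} {M : ℝ}
    (hM : ∀ i, N i ∉ V → M ≤ N i) :
    (fun τ ↦ thetaSeries N τ -
        ∑ v ∈ V, ({i | N i = v}.ncard : ℂ) * Complex.exp (Real.pi * Complex.I * τ * v))
      =O[atImInfty] fun τ ↦ Real.exp (-(Real.pi * M) * τ.im) := by
  classical
  have hfin : {i | N i ∈ V}.Finite :=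
    (V.finite_toSet.biUnion fun v _ ↦ hN.finite_eq v).subset fun i (hi : N i ∈ V) ↦
      Set.mem_biUnion hi rfl
  refine (hN.thetaSeries_sub_sum_isBigO (s := hfin.toFinset)
    fun i hi ↦ hM i (by simpa using hi)).congr_left fun τ ↦ ?_
  rw [← Finset.sum_fiberwise_of_maps_to (t := V) (g := N) fun i hi ↦ by simpa using hi]
  congr 1
  refine Finset.sum_congr rfl fun v hv ↦ ?_
  have hfiber : {i ∈ hfin.toFinset | N i = v} = (hN.finite_eq v).toFinset := by
    ext i
    simpa using fun h : N i = v ↦ h ▸ hv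
  rw [Finset.sum_congr rfl fun i hi ↦ by rw [(Finset.mem_filter.1 hi).2], Finset.sum_const,
    hfiber, Set.ncard_eq_toFinset_card _ (hN.finite_eq v), nsmul_eq_mul]

lemma comp_injective (hN : IsThetaExponent N) {κ : Type*} {e : κ → ι} (he : e.Injective) :
    IsThetaExponent (N ∘ e) :=
  ⟨fun i ↦ hN.nonneg (e i), fun a ha ↦ (hN.summable_exp a ha).comp_injective he⟩

end IsThetaExponent

section Poisson

open MeasureTheory UnitAddTorus

variable {ι : Type*}

/-- The quotient map `ℝ^ι → ℝ^ι / ℤ^ι`. -/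
def toUnitAddTorus (x : ι → ℝ) : UnitAddTorus ι := fun i ↦ x i

lemma isOpenQuotientMap_toUnitAddTorus : IsOpenQuotientMap (toUnitAddTorus (ι := ι)) :=
  IsOpenQuotientMap.piMap fun _ ↦ QuotientAddGroup.isOpenQuotientMap_mk

lemma exists_add_intCast_eq_of_toUnitAddTorus_eq {x y : ι → ℝ}
    (h : toUnitAddTorus x = toUnitAddTorus y) : ∃ k : ι → ℤ, y + Int.cast ∘ k = x := by
  have hcoord (i : ι) : ∃ k : ℤ, y i + k = x i := by
    have hi : ((x i - y i : ℝ) : UnitAddCircle) = 0 := by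
      rw [AddCircle.coe_sub, sub_eq_zero]
      exact congrFun h i
    obtain ⟨k, hk⟩ := (AddCircle.coe_eq_zero_iff (1 : ℝ)).1 hi
    exact ⟨k, by rw [← zsmul_one k, hk, add_sub_cancel]⟩
  choose k hk using hcoord
  exact ⟨k, funext hk⟩

lemma toUnitAddTorus_add_intCast (x : ι → ℝ) (k : ι → ℤ) :
    toUnitAddTorus (x + Int.cast ∘ k) = toUnitAddTorus x := by
  ext i
  simp [toUnitAddTorus]

variable [Fintype ι]

lemma mFourier_toUnitAddTorus (m : ι → ℤ) (x : ι → ℝ) :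
    mFourier m (toUnitAddTorus x) =
      Complex.exp (2 * Real.pi * Complex.I * (∑ i, m i * x i : ℝ)) := by
  simp only [mFourier, ContinuousMap.coe_mk, toUnitAddTorus, fourier_coe_apply]
  rw [← Complex.exp_sum, Complex.ofReal_sum, Finset.mul_sum]
  refine congrArg _ (Finset.sum_congr rfl fun i _ ↦ ?_)
  push_cast
  ring

lemma hasSum_setIntegral_Ioc_add_intCast {E : Type*} [NormedAddCommGroup E] [NormedSpace ℝ E]
    {g : (ι → ℝ) → E} (hg : Integrable g) :
    HasSum (fun k : ι → ℤ ↦ ∫ x in {x | ∀ i, x i ∈ Set.Ioc (0 : ℝ) (0 + 1)},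
      g (x + Int.cast ∘ k)) (∫ x, g x) := by
  let cube (k : ι → ℤ) : Set (ι → ℝ) := {x | ∀ i, x i ∈ Set.Ioc (k i : ℝ) (k i + 1)}
  have hmeas (k) : MeasurableSet (cube k) := MeasurableSet.univ_pi' fun i ↦ measurableSet_Ioc
  have mem_cube {k x} : x ∈ cube k ↔ (fun i ↦ ⌈x i⌉ - 1) = k := by
    simp only [cube, funext_iff, Set.mem_ofPred_eq, sub_eq_iff_eq_add, Int.ceil_eq_iff]
    push_cast
    simp only [add_sub_cancel_right, Set.mem_Ioc]
  have hdisj : Pairwise (Function.onFun Disjoint cube) := fun k l hkl ↦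
    Set.disjoint_left.2 fun x hk hl ↦ hkl ((mem_cube.1 hk).symm.trans (mem_cube.1 hl))
  have hunion : ⋃ k, cube k = Set.univ :=
    Set.eq_univ_of_forall fun x ↦ Set.mem_iUnion.2 ⟨_, mem_cube.2 rfl⟩
  have hsum := hasSum_integral_iUnion hmeas hdisj (f := g) (by rw [hunion]; exact hg.integrableOn)
  rw [hunion, setIntegral_univ] at hsum
  refine hsum.congr_fun fun k ↦ ?_
  rw [← (measurePreserving_add_right volume (Int.cast ∘ k : ι → ℝ)).setIntegral_preimage_emb
    (measurableEmbedding_addRight _) g (cube k)]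
  congr 2
  ext x
  simp [cube, add_comm (_ : ℝ) 1]

lemma mFourierCoeff_of_hasSum_add_intCast {f : (ι → ℝ) → ℂ} (hf : Integrable f)
    {F : UnitAddTorus ι → ℂ}
    (hF : ∀ x, HasSum (fun k : ι → ℤ ↦ f (x + Int.cast ∘ k)) (F (toUnitAddTorus x)))
    (m : ι → ℤ) :
    mFourierCoeff F m = ∫ x, mFourier (-m) (toUnitAddTorus x) * f x := by
  set g : (ι → ℝ) → ℂ := fun x ↦ mFourier (-m) (toUnitAddTorus x) * f x
  have hg : Integrable g := by
    refine hf.bdd_mul (c := 1) ?_ (.of_forall fun x ↦ ?_)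
    · exact ((mFourier (-m)).continuous.comp
        isOpenQuotientMap_toUnitAddTorus.continuous).aestronglyMeasurable
    · exact ((mFourier (-m)).norm_coe_le_norm _).trans_eq mFourier_norm
  have hg_add (x : ι → ℝ) (k : ι → ℤ) : g (x + Int.cast ∘ k) =
      mFourier (-m) (toUnitAddTorus x) * f (x + Int.cast ∘ k) := by
    simp only [g, toUnitAddTorus_add_intCast]
  rw [← (hasSum_setIntegral_Ioc_add_intCast hg).tsum_eq, mFourierCoeff_eq_integral F m 0,
    integral_tsum_of_summable_integral_norm
      (fun k ↦ (hg.comp_add_right _).integrableOn)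
      (hasSum_setIntegral_Ioc_add_intCast hg.norm).summable]
  refine integral_congr_ae (.of_forall fun x ↦ ?_)
  simp only [hg_add, tsum_mul_left, (hF x).tsum_eq, smul_eq_mul]
  rfl

lemma tsum_add_intCast_eq_tsum_mFourier {f : C(ι → ℝ, ℂ)} (hf : Integrable f)
    (hloc : ∀ K : TopologicalSpace.Compacts (ι → ℝ), Summable fun k : ι → ℤ ↦
      ‖(f.comp (.addRight (Int.cast ∘ k))).restrict K‖)
    (hsum : Summable fun m : ι → ℤ ↦ ∫ x, mFourier (-m) (toUnitAddTorus x) * f x)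
    (v : ι → ℝ) :
    ∑' k : ι → ℤ, f (v + Int.cast ∘ k) =
      ∑' m : ι → ℤ, (∫ x, mFourier (-m) (toUnitAddTorus x) * f x) *
        mFourier m (toUnitAddTorus v) := by
  have hG := (ContinuousMap.summable_of_locally_summable_norm hloc).hasSum
  set G := ∑' k : ι → ℤ, f.comp (.addRight (Int.cast ∘ k))
  have hG_apply (x : ι → ℝ) : HasSum (fun k : ι → ℤ ↦ f (x + Int.cast ∘ k)) (G x) :=
    ContinuousMap.hasSum_apply hG x
  have hG_periodic (x : ι → ℝ) (k : ι → ℤ) : G (x + Int.cast ∘ k) = G x := by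
    refine (((Equiv.addLeft k).hasSum_iff.2 (hG_apply x)).congr_fun fun l ↦ ?_).unique
      (hG_apply (x + Int.cast ∘ k)) |>.symm
    simp only [Function.comp_apply, Equiv.coe_addLeft]
    congr 1
    ext i
    simp [add_assoc]
  let quot : C(ι → ℝ, UnitAddTorus ι) := ⟨_, isOpenQuotientMap_toUnitAddTorus.continuous⟩
  have hquot : Topology.IsQuotientMap quot := isOpenQuotientMap_toUnitAddTorus.isQuotientMap
  have hfactors : Function.FactorsThrough G quot := fun x y hxy ↦ by
    obtain ⟨k, rfl⟩ := exists_add_intCast_eq_of_toUnitAddTorus_eq hxy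
    exact hG_periodic y k
  let F : C(UnitAddTorus ι, ℂ) := hquot.lift G hfactors
  have hF (x) : F (toUnitAddTorus x) = G x := DFunLike.congr_fun (hquot.lift_comp G hfactors) x
  have hcoeff := funext <| mFourierCoeff_of_hasSum_add_intCast (F := F) hf fun x ↦
    hF x ▸ hG_apply x
  have hseries := hasSum_mFourier_series_apply_of_summable (f := F)
    (by simpa only [hcoeff] using hsum) (toUnitAddTorus v)
  rw [hF] at hseries
  simpa only [hcoeff, smul_eq_mul, (hG_apply v).tsum_eq] using hseries.tsum_eq.symm

end Poisson

section PoissonLattice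

open MeasureTheory UnitAddTorus Module Submodule
open scoped FourierTransform

/-- The dual `{x ∈ E : ⟪x, y⟫ ∈ ℤ for all y ∈ L}` of a subgroup of a real inner product space. -/
def dualLattice {E : Type*} [NormedAddCommGroup E] [InnerProductSpace ℝ E] (L : Submodule ℤ E) :
    Submodule ℤ E :=
  LinearMap.BilinForm.dualSubmodule (innerₗ E) L

lemma mem_dualLattice {E : Type*} [NormedAddCommGroup E] [InnerProductSpace ℝ E]
    {L : Submodule ℤ E} {x : E} : x ∈ dualLattice L ↔ ∀ y ∈ L, ∃ m : ℤ, ⟪x, y⟫ = m := by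
  simp only [dualLattice, LinearMap.BilinForm.mem_dualSubmodule, Submodule.mem_one,
    innerₗ_apply_apply, algebraMap_int_eq, eq_intCast, eq_comm]

lemma nondegenerate_innerₗ (E : Type*) [NormedAddCommGroup E] [InnerProductSpace ℝ E] :
    LinearMap.BilinForm.Nondegenerate (innerₗ E) :=
  ⟨fun x hx ↦ inner_self_eq_zero.1 (hx x), fun x hx ↦ inner_self_eq_zero.1 (hx x)⟩

lemma exists_equiv_coe_eq_sum_of_span_eq {ι E : Type*} [Fintype ι] [AddCommGroup E] [Module ℝ E]
    {L : Submodule ℤ E} (b : Basis ι ℝ E) (hb : span ℤ (Set.range b) = L) :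
    ∃ φ : (ι → ℤ) ≃ L, ∀ k, (φ k : E) = ∑ i, (k i : ℝ) • b i := by
  subst hb
  refine ⟨(b.restrictScalars ℤ).equivFun.symm.toEquiv, fun k ↦ ?_⟩
  simp only [LinearEquiv.coe_toEquiv, Basis.equivFun_symm_apply, coe_sum, Int.cast_smul_eq_zsmul]
  exact Finset.sum_congr rfl fun i _ ↦ by
    rw [SetLike.val_smul, Basis.restrictScalars_apply]

variable {E : Type*} [NormedAddCommGroup E] [InnerProductSpace ℝ E] [FiniteDimensional ℝ E]

lemma exists_basis_span_eq_dualLattice (L : Submodule ℤ E) [DiscreteTopology L]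
    [IsZLattice ℝ L] :
    ∃ (n : ℕ) (b d : Basis (Fin n) ℝ E), span ℤ (Set.range b) = L ∧
      span ℤ (Set.range d) = dualLattice L ∧ ∀ i j, ⟪d i, b j⟫ = if j = i then 1 else 0 := by
  have := ZLattice.module_finite ℝ L
  have := ZLattice.module_free ℝ L
  let b := (finBasis ℤ L).ofZLatticeBasis ℝ L
  have hb : span ℤ (Set.range b) = L := (finBasis ℤ L).ofZLatticeBasis_span ℝ
  exact ⟨_, b, LinearMap.BilinForm.dualBasis (innerₗ E) (nondegenerate_innerₗ E) b, hb,
    (LinearMap.BilinForm.dualSubmodule_span_of_basis _ (nondegenerate_innerₗ E) b).symm.trans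
      (congrArg dualLattice hb),
    LinearMap.BilinForm.apply_dualBasis_left (nondegenerate_innerₗ E) b⟩

lemma discreteTopology_dualLattice (L : Submodule ℤ E) [DiscreteTopology L] [IsZLattice ℝ L] :
    DiscreteTopology (dualLattice L) := by
  obtain ⟨n, -, d, -, hd, -⟩ := exists_basis_span_eq_dualLattice L
  rw [← hd]
  infer_instance

lemma exists_equiv_lattice_equiv_dualLattice (L : Submodule ℤ E) [DiscreteTopology L]
    [IsZLattice ℝ L] :
    ∃ (n : ℕ) (e : (Fin n → ℝ) ≃L[ℝ] E) (φ : (Fin n → ℤ) ≃ L) (ψ : (Fin n → ℤ) ≃ dualLattice L),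
      (∀ k, e (Int.cast ∘ k) = φ k) ∧ ∀ m u, ⟪(ψ m : E), e u⟫ = ∑ i, m i * u i := by
  obtain ⟨n, b, d, hb, hd, hdual⟩ := exists_basis_span_eq_dualLattice L
  obtain ⟨φ, hφ⟩ := exists_equiv_coe_eq_sum_of_span_eq b hb
  obtain ⟨ψ, hψ⟩ := exists_equiv_coe_eq_sum_of_span_eq d hd
  refine ⟨n, b.equivFun.symm.toContinuousLinearEquiv, φ, ψ, fun k ↦ ?_, fun m u ↦ ?_⟩
  · rw [hφ]
    exact b.equivFun_symm_apply _
  · rw [hψ, LinearEquiv.coe_toContinuousLinearEquiv', b.equivFun_symm_apply]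
    simp [sum_inner, inner_sum, inner_smul_left, inner_smul_right, hdual, mul_comm]

variable [MeasurableSpace E] [BorelSpace E]

lemma integral_comp_eq_mul_integral_and_integrable_comp {ι : Type*} [Fintype ι]
    (e : (ι → ℝ) ≃L[ℝ] E) : ∃ c : ℂ, ∀ g : E → ℂ,
      ∫ u, g (e u) = c * (∫ x, g x) ∧ (Integrable g → Integrable (g ∘ e)) := by
  have hemb : MeasurableEmbedding e := e.toHomeomorph.measurableEmbedding
  set c := (volume.map e).addHaarScalarFactor (volume : Measure E)
  have hc : volume.map e = c • volume := Measure.isAddLeftInvariant_eq_smul _ _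
  refine ⟨(c : ℝ), fun g ↦ ⟨?_, fun hg ↦ hemb.integrable_map_iff.1 ?_⟩⟩
  · rw [← hemb.integral_map, hc, integral_smul_nnreal_measure, NNReal.smul_def,
      Complex.real_smul]
  · rw [hc]
    exact hg.smul_measure_nnreal

lemma exists_tsum_add_eq_mul_tsum_fourier (L : Submodule ℤ E) [DiscreteTopology L]
    [IsZLattice ℝ L] :
    ∃ c : ℂ, ∀ f : C(E, ℂ), Integrable f →
      (∀ K : TopologicalSpace.Compacts E, Summable fun x : L ↦
        ‖(f.comp (.addRight (x : E))).restrict K‖) →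
      (Summable fun y : dualLattice L ↦ 𝓕 (⇑f) (y : E)) →
      ∀ v : E, ∑' x : L, f (v + x) =
        c * ∑' y : dualLattice L,
          𝓕 (⇑f) (y : E) * Complex.exp (2 * Real.pi * Complex.I * ⟪(y : E), v⟫) := by
  obtain ⟨n, e, φ, ψ, hφ, hψ⟩ := exists_equiv_lattice_equiv_dualLattice L
  obtain ⟨c, hc⟩ := integral_comp_eq_mul_integral_and_integrable_comp e
  refine ⟨c, fun f hf hloc hsum v ↦ ?_⟩
  let g : C(Fin n → ℝ, ℂ) := f.comp ⟨e, e.continuous⟩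
  have hg (u) : g u = f (e u) := rfl
  have hcoeff (m) : ∫ u, mFourier (-m) (toUnitAddTorus u) * g u = c * 𝓕 (⇑f) (ψ m : E) := by
    rw [Real.fourier_eq', ← (hc _).1]
    refine integral_congr_ae (.of_forall fun u ↦ ?_)
    simp only [mFourier_toUnitAddTorus, real_inner_comm (ψ m : E), hψ, smul_eq_mul, hg]
    congr 2
    push_cast [Pi.neg_apply, neg_mul, Finset.sum_neg_distrib]
    ring
  have hlocg (K : TopologicalSpace.Compacts (Fin n → ℝ)) :
      Summable fun k : Fin n → ℤ ↦ ‖(g.comp (.addRight (Int.cast ∘ k))).restrict K‖ := by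
    refine .of_nonneg_of_le (fun _ ↦ norm_nonneg _) (fun k ↦ ?_)
      ((hloc (K.map e e.continuous)).comp_injective φ.injective)
    refine (ContinuousMap.norm_le _ (norm_nonneg _)).2 fun u ↦ ?_
    have hu : e u ∈ K.map e e.continuous := Set.mem_image_of_mem e u.2
    have hgu : g (u.1 + Int.cast ∘ k) = f (e u + φ k) := by rw [hg, map_add e, hφ]
    change ‖g (u.1 + Int.cast ∘ k)‖ ≤ _
    rw [hgu]
    exact ContinuousMap.norm_coe_le_norm
      ((f.comp (.addRight (φ k : E))).restrict (K.map e e.continuous)) ⟨_, hu⟩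
  have hpoisson := tsum_add_intCast_eq_tsum_mFourier ((hc f).2 hf) hlocg
    (((ψ.summable_iff.2 hsum).mul_left c).congr fun m ↦ (hcoeff m).symm) (e.symm v)
  simp only [hcoeff, mul_assoc, tsum_mul_left] at hpoisson
  simp only [hg, map_add, hφ, e.apply_symm_apply, mFourier_toUnitAddTorus, ← hψ] at hpoisson
  rw [← φ.tsum_eq, ← ψ.tsum_eq]
  exact hpoisson

end PoissonLattice

section LatticeTheta

open MeasureTheory
open scoped FourierTransform

lemma norm_sq_div_two_sub_norm_sq_le {E : Type*} [SeminormedAddCommGroup E] (v x : E) :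
    ‖x‖ ^ 2 / 2 - ‖v‖ ^ 2 ≤ ‖v + x‖ ^ 2 := by
  have h : ‖x‖ ≤ ‖v + x‖ + ‖v‖ := by simpa using norm_sub_le (v + x) v
  nlinarith [sq_nonneg (‖v + x‖ - ‖v‖), norm_nonneg x]

variable {E : Type*} [NormedAddCommGroup E]

lemma exp_neg_mul_norm_add_sq_le {a : ℝ} (ha : 0 < a) (v x : E) :
    Real.exp (-a * ‖v + x‖ ^ 2) ≤ Real.exp (a * ‖v‖ ^ 2) * Real.exp (-(a / 2) * ‖x‖ ^ 2) := by
  rw [← Real.exp_add, Real.exp_le_exp]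
  linarith [mul_le_mul_of_nonneg_left (norm_sq_div_two_sub_norm_sq_le v x) ha.le]

/-- The Gaussian `x ↦ e^{πiτ‖x‖²}`. -/
def gaussian (E : Type*) [NormedAddCommGroup E] (τ : ℍ) : C(E, ℂ) :=
  ⟨fun x ↦ Complex.exp (Real.pi * Complex.I * τ * (‖x‖ ^ 2 : ℝ)), by fun_prop⟩

lemma gaussian_apply (τ : ℍ) (x : E) :
    gaussian E τ x = Complex.exp (Real.pi * Complex.I * τ * (‖x‖ ^ 2 : ℝ)) := rfl

lemma norm_gaussian (τ : ℍ) (x : E) :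
    ‖gaussian E τ x‖ = Real.exp (-(Real.pi * τ.im) * ‖x‖ ^ 2) := by
  rw [gaussian_apply, norm_exp_pi_mul_I_mul, coe_im]
  ring_nf

variable [InnerProductSpace ℝ E] [FiniteDimensional ℝ E]

lemma summable_exp_neg_mul_norm_sq (L : Submodule ℤ E) [DiscreteTopology L] {a : ℝ} (ha : 0 < a) :
    Summable fun x : L ↦ Real.exp (-a * ‖(x : E)‖ ^ 2) := by
  set r := Module.finrank ℤ L + 1
  have hpow := (ZLattice.summable_norm_pow_inv (L := L) (2 * r) (by omega)).mul_left
    (r.factorial / a ^ r : ℝ)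
  refine hpow.of_norm_bounded_eventually ?_
  have hne : ∀ᶠ x : L in cofinite, x ≠ 0 := by simp
  filter_upwards [hne] with x hx
  have hx' : 0 < ‖(x : E)‖ := by simpa using hx
  rw [Real.norm_of_nonneg (Real.exp_pos _).le, neg_mul, Real.exp_neg]
  calc (Real.exp (a * ‖(x : E)‖ ^ 2))⁻¹
      ≤ ((a * ‖(x : E)‖ ^ 2) ^ r / r.factorial)⁻¹ :=
        inv_anti₀ (by positivity) (Real.pow_div_factorial_le_exp _ (by positivity) r)
    _ = r.factorial / a ^ r * ‖x‖⁻¹ ^ (2 * r) := by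
        rw [mul_pow, ← pow_mul, Submodule.coe_norm, inv_pow]
        field_simp

lemma isThetaExponent_norm_add_sq (L : Submodule ℤ E) [DiscreteTopology L] (v : E) :
    IsThetaExponent fun x : L ↦ ‖v + x‖ ^ 2 where
  nonneg _ := sq_nonneg _
  summable_exp _ ha :=
    .of_nonneg_of_le (fun _ ↦ (Real.exp_pos _).le) (fun x ↦ exp_neg_mul_norm_add_sq_le ha v x)
      ((summable_exp_neg_mul_norm_sq L (half_pos ha)).mul_left _)

lemma isThetaExponent_norm_sq (L : Submodule ℤ E) [DiscreteTopology L] :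
    IsThetaExponent fun x : L ↦ ‖(x : E)‖ ^ 2 := by
  simpa using isThetaExponent_norm_add_sq L 0

lemma summable_norm_restrict_gaussian (L : Submodule ℤ E) [DiscreteTopology L] (τ : ℍ)
    (K : TopologicalSpace.Compacts E) :
    Summable fun x : L ↦ ‖((gaussian E τ).comp (.addRight (x : E))).restrict K‖ := by
  have ha : 0 < Real.pi * τ.im := mul_pos Real.pi_pos τ.im_pos
  obtain ⟨R, hR⟩ := K.isCompact.isBounded.exists_norm_le
  refine .of_nonneg_of_le (fun _ ↦ norm_nonneg _) (fun x ↦ ?_)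
    ((summable_exp_neg_mul_norm_sq L (half_pos ha)).mul_left
      (Real.exp (Real.pi * τ.im * R ^ 2)))
  refine (ContinuousMap.norm_le _ (by positivity)).2 fun u ↦ ?_
  change ‖gaussian E τ (u.1 + x)‖ ≤ _
  rw [norm_gaussian]
  refine (exp_neg_mul_norm_add_sq_le ha u.1 x).trans ?_
  have := hR u.1 u.2
  gcongr

lemma integrable_gaussian [MeasurableSpace E] [BorelSpace E] (τ : ℍ) :
    Integrable (gaussian E τ) := by
  have hre : 0 < (-(Real.pi * Complex.I * τ)).re := by
    simpa using mul_pos Real.pi_pos τ.im_pos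
  refine (GaussianFourier.integrable_cexp_neg_mul_sq_norm_add (V := E) hre 0 0).congr
    (.of_forall fun x ↦ ?_)
  simp [gaussian_apply]

lemma fourier_gaussian [MeasurableSpace E] [BorelSpace E] (τ : ℍ) (y : E) :
    𝓕 (⇑(gaussian E τ)) y = thetaFactor (ModularGroup.S • τ) ^ Module.finrank ℝ E *
      gaussian E (ModularGroup.S • τ) y := by
  have hτ := τ.ne_zero
  have hpi : (Real.pi : ℂ) ≠ 0 := mod_cast Real.pi_ne_zero
  have hre : 0 < (-(Real.pi * Complex.I * τ)).re := by
    simpa using mul_pos Real.pi_pos τ.im_pos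
  have hgauss : ⇑(gaussian E τ) =
      fun x ↦ Complex.exp (-(-(Real.pi * Complex.I * τ)) * ‖x‖ ^ 2) := by
    ext x
    rw [gaussian_apply, neg_neg, Complex.ofReal_pow]
  rw [hgauss, fourier_gaussian_innerProductSpace hre, gaussian_apply, coe_modular_S_smul,
    thetaFactor, ← Complex.cpow_nat_mul, coe_modular_S_smul, mul_one_div]
  congr 2
  · field_simp
    rw [Complex.I_sq]
  · push_cast
    field_simp
    rw [Complex.I_sq]
    ring

lemma exists_thetaSeries_norm_add_sq_eq (L : Submodule ℤ E) [DiscreteTopology L]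
    [IsZLattice ℝ L] :
    ∃ c : ℂ, ∀ (τ : ℍ) (v : E), thetaSeries (fun x : L ↦ ‖v + x‖ ^ 2) τ =
      c * thetaFactor (ModularGroup.S • τ) ^ Module.finrank ℝ E *
        ∑' y : dualLattice L, gaussian E (ModularGroup.S • τ) y *
          Complex.exp (2 * Real.pi * Complex.I * ⟪(y : E), v⟫) := by
  borelize E
  have := discreteTopology_dualLattice L
  obtain ⟨c, hc⟩ := exists_tsum_add_eq_mul_tsum_fourier L
  refine ⟨c, fun τ v ↦ ?_⟩
  have hsum : Summable fun y : dualLattice L ↦ gaussian E (ModularGroup.S • τ) y :=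
    (isThetaExponent_norm_sq (dualLattice L)).summable _
  have h := hc (gaussian E τ) (integrable_gaussian τ) (summable_norm_restrict_gaussian L τ)
    (by simpa only [fourier_gaussian] using hsum.mul_left _) v
  simp only [fourier_gaussian, mul_assoc (_ ^ _), tsum_mul_left] at h
  rw [mul_assoc c]
  exact h

-- The constant in Poisson summation is `1`, as one sees at the fixed point `i` of `τ ↦ -1/τ`.
lemma thetaSeries_norm_add_sq_S_smul {L : Submodule ℤ E} [DiscreteTopology L] [IsZLattice ℝ L]
    (hL : dualLattice L = L) (τ : ℍ) (v : E) :
    thetaSeries (fun x : L ↦ ‖v + x‖ ^ 2) (ModularGroup.S • τ) =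
      thetaFactor τ ^ Module.finrank ℝ E *
        ∑' x : L, gaussian E τ x * Complex.exp (2 * Real.pi * Complex.I * ⟪(x : E), v⟫) := by
  obtain ⟨c, hc⟩ := exists_thetaSeries_norm_add_sq_eq L
  rw [hL] at hc
  have hSI : ModularGroup.S • I = I := by
    ext
    rw [coe_modular_S_smul, coe_I, neg_div, one_div, Complex.inv_I, neg_neg]
  have hI : thetaSeries (fun x : L ↦ ‖(x : E)‖ ^ 2) I =
      c * thetaSeries (fun x : L ↦ ‖(x : E)‖ ^ 2) I := by
    have h := hc I 0
    simp only [zero_add, hSI, thetaFactor_I, one_pow, mul_one, inner_zero_right,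
      Complex.ofReal_zero, mul_zero, Complex.exp_zero] at h
    exact h
  have hc1 : c = 1 :=
    (mul_eq_right₀ (isThetaExponent_norm_sq L).thetaSeries_I_ne_zero).1 hI.symm
  rw [hc, hc1, one_mul, modular_S_smul_S_smul]

end LatticeTheta

section SelfDual

variable {E : Type*} [NormedAddCommGroup E] [InnerProductSpace ℝ E] {L : Submodule ℤ E}

lemma exists_inner_eq_intCast (hL : dualLattice L = L) {x y : E} (hx : x ∈ L) (hy : y ∈ L) :
    ∃ m : ℤ, ⟪x, y⟫ = m :=
  mem_dualLattice.1 (hL.ge hx) y hy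

lemma exists_norm_sq_eq_intCast (hL : dualLattice L = L) {x : E} (hx : x ∈ L) :
    ∃ m : ℤ, ‖x‖ ^ 2 = m :=
  (exists_inner_eq_intCast hL hx hx).imp fun _ h ↦ real_inner_self_eq_norm_sq x ▸ h

lemma discreteTopology_of_dualLattice_eq (hL : dualLattice L = L) : DiscreteTopology L := by
  refine .of_forall_le_norm one_pos fun x hx ↦ ?_
  obtain ⟨m, hm⟩ := exists_norm_sq_eq_intCast hL x.2
  have hpos : 0 < ‖(x : E)‖ ^ 2 := by
    have : (x : E) ≠ 0 := by simpa using hx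
    positivity
  rw [hm, Int.cast_pos] at hpos
  have h1 : (1 : ℝ) ≤ ‖(x : E)‖ ^ 2 := hm ▸ mod_cast hpos
  exact (one_le_sq_iff₀ (norm_nonneg _)).1 h1

lemma isZLattice_of_dualLattice_eq [FiniteDimensional ℝ E] [DiscreteTopology L]
    (hL : dualLattice L = L) : IsZLattice ℝ L := by
  refine ⟨Submodule.orthogonal_eq_bot_iff.1 ((Submodule.eq_bot_iff _).2 fun v hv ↦ ?_)⟩
  by_contra hv0
  have hmem : (2 * ‖v‖)⁻¹ • v ∈ L := hL.le <| mem_dualLattice.2 fun y hy ↦ ⟨0, by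
    rw [inner_smul_left, (Submodule.mem_orthogonal' _ _).1 hv y (Submodule.subset_span hy),
      mul_zero, Int.cast_zero]⟩
  obtain ⟨m, hm⟩ := exists_norm_sq_eq_intCast hL hmem
  have hnorm : ‖(2 * ‖v‖)⁻¹ • v‖ = 1 / 2 := by
    have := norm_ne_zero_iff.2 hv0
    rw [norm_smul, norm_inv, norm_mul, norm_norm, Real.norm_two]
    field_simp
  have h4 : 4 * m = 1 := by
    rify
    rw [← hm, hnorm]
    norm_num
  omega

/-- `s` represents half the norm modulo `1` on `L`, that is, `2s` is a characteristic vector. -/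
def IsHalfCharacteristic (L : Submodule ℤ E) (s : E) : Prop :=
  ∀ x ∈ L, ∃ m : ℤ, ⟪x, s⟫ = ‖x‖ ^ 2 / 2 + m

lemma exists_isHalfCharacteristic [FiniteDimensional ℝ E] [DiscreteTopology L] [IsZLattice ℝ L]
    (hL : dualLattice L = L) : ∃ s, IsHalfCharacteristic L s := by
  obtain ⟨n, b, -, hb, -⟩ := exists_basis_span_eq_dualLattice L
  let ℓ := b.constr ℝ fun i ↦ ‖b i‖ ^ 2 / 2
  refine ⟨(InnerProductSpace.toDual ℝ E).symm ℓ.toContinuousLinearMap, fun x hx ↦ ?_⟩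
  rw [real_inner_comm, InnerProductSpace.toDual_symm_apply, LinearMap.coe_toContinuousLinearMap']
  rw [← hb] at hx
  suffices h : x ∈ L ∧ ∃ m : ℤ, ℓ x = ‖x‖ ^ 2 / 2 + m from h.2
  induction hx using Submodule.span_induction with
  | mem x hx =>
    obtain ⟨i, rfl⟩ := hx
    exact ⟨hb.le (Submodule.subset_span (Set.mem_range_self i)), 0, by simp [ℓ]⟩
  | zero => exact ⟨L.zero_mem, 0, by simp⟩
  | add x y _ _ hx hy =>
    obtain ⟨hx, k, hk⟩ := hx
    obtain ⟨hy, l, hl⟩ := hy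
    obtain ⟨j, hj⟩ := exists_inner_eq_intCast hL hx hy
    refine ⟨L.add_mem hx hy, k + l - j, ?_⟩
    rw [map_add, hk, hl, norm_add_sq_real, hj]
    push_cast
    ring
  | smul a x _ hx =>
    obtain ⟨hx, k, hk⟩ := hx
    obtain ⟨j, hj⟩ := exists_norm_sq_eq_intCast hL hx
    obtain ⟨t, ht⟩ := Int.even_mul_pred_self a
    refine ⟨L.smul_mem a hx, a * k - t * j, ?_⟩
    rify at ht
    rw [← Int.cast_smul_eq_zsmul ℝ a x, map_smul, hk, norm_smul, mul_pow, hj, Real.norm_eq_abs,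
      sq_abs, smul_eq_mul]
    push_cast
    linear_combination (-(j : ℝ) / 2) * ht

namespace IsHalfCharacteristic

variable {s : E}

lemma iff_sub_mem {v : E} (hs : IsHalfCharacteristic L s) (hL : dualLattice L = L) :
    IsHalfCharacteristic L v ↔ v - s ∈ L := by
  refine ⟨fun hv ↦ hL.le (mem_dualLattice.2 fun y hy ↦ ?_), fun hvs y hy ↦ ?_⟩
  · obtain ⟨k, hk⟩ := hv y hy
    obtain ⟨l, hl⟩ := hs y hy
    exact ⟨k - l, by rw [real_inner_comm, inner_sub_right, hk, hl]; push_cast; ring⟩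
  · obtain ⟨l, hl⟩ := hs y hy
    obtain ⟨k, hk⟩ := exists_inner_eq_intCast hL hy hvs
    exact ⟨k + l, by rw [inner_sub_right] at hk; push_cast; linarith⟩

lemma exists_norm_add_sq_eq (hs : IsHalfCharacteristic L s) (hL : dualLattice L = L) {x : E}
    (hx : x ∈ L) : ∃ m : ℤ, ‖s + x‖ ^ 2 = ‖s‖ ^ 2 + 2 * m := by
  obtain ⟨m, hm⟩ := hs x hx
  obtain ⟨j, hj⟩ := exists_norm_sq_eq_intCast hL hx
  refine ⟨j + m, ?_⟩
  rw [norm_add_sq_real, real_inner_comm, hm, hj]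
  push_cast
  ring

lemma exp_pi_mul_T_smul (hs : IsHalfCharacteristic L s) {x : E} (hx : x ∈ L) (τ : ℍ) :
    Complex.exp (Real.pi * Complex.I * (ModularGroup.T • τ : ℍ) * (‖x‖ ^ 2 : ℝ)) =
      gaussian E τ x * Complex.exp (2 * Real.pi * Complex.I * ⟪x, s⟫) := by
  obtain ⟨m, hm⟩ := hs x hx
  rw [gaussian_apply, ← Complex.exp_add, Complex.exp_eq_exp_iff_exists_int, hm,
    coe_modular_T_smul]
  exact ⟨-m, by push_cast; ring⟩

lemma thetaSeries_T_smul (hs : IsHalfCharacteristic L s) (hL : dualLattice L = L) (τ : ℍ) :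
    thetaSeries (fun x : L ↦ ‖s + x‖ ^ 2) (ModularGroup.T • τ) =
      Complex.exp (Real.pi * Complex.I * (‖s‖ ^ 2 : ℝ)) *
        thetaSeries (fun x : L ↦ ‖s + x‖ ^ 2) τ := by
  rw [thetaSeries, thetaSeries, ← tsum_mul_left]
  refine tsum_congr fun x ↦ ?_
  obtain ⟨m, hm⟩ := hs.exists_norm_add_sq_eq hL x.2
  rw [← Complex.exp_add, Complex.exp_eq_exp_iff_exists_int, hm, coe_modular_T_smul]
  exact ⟨m, by push_cast; ring⟩

variable [FiniteDimensional ℝ E] [DiscreteTopology L] [IsZLattice ℝ L]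

lemma isThetaTriple (hs : IsHalfCharacteristic L s) (hL : dualLattice L = L) :
    IsThetaTriple (Module.finrank ℝ E) (thetaSeries fun x : L ↦ ‖(x : E)‖ ^ 2)
      (fun τ ↦ thetaSeries (fun x : L ↦ ‖(x : E)‖ ^ 2) (ModularGroup.T • τ))
      (thetaSeries fun x : L ↦ ‖s + x‖ ^ 2) where
  mdiff₃ := (isThetaExponent_norm_sq L).mdifferentiable_thetaSeries
  mdiff₄ := (isThetaExponent_norm_sq L).mdifferentiable_thetaSeries.comp
    (mdifferentiable_smul (g := (ModularGroup.T : GL (Fin 2) ℝ)) (by simp))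
  mdiff₂ := (isThetaExponent_norm_add_sq L s).mdifferentiable_thetaSeries
  T₃ _ := rfl
  T₄ τ := by
    refine tsum_congr fun x ↦ ?_
    obtain ⟨m, hm⟩ := exists_norm_sq_eq_intCast hL x.2
    simp only [hm, coe_modular_T_smul, Complex.exp_eq_exp_iff_exists_int]
    exact ⟨m, by push_cast; ring⟩
  S₃ τ := by
    have h := thetaSeries_norm_add_sq_S_smul hL τ 0
    simp only [zero_add, inner_zero_right, Complex.ofReal_zero, mul_zero, Complex.exp_zero,
      mul_one] at h
    exact h
  S₄ τ := by
    have h := thetaSeries_norm_add_sq_S_smul hL (ModularGroup.S • τ) s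
    rw [modular_S_smul_S_smul, thetaFactor_S_smul, inv_pow] at h
    rw [h, mul_inv_cancel_left₀ (pow_ne_zero _ (thetaFactor_ne_zero τ))]
    exact tsum_congr fun x ↦ hs.exp_pi_mul_T_smul x.2 _

-- Compare the two descriptions of the action of `T` on the theta series of `s + L`.
lemma exists_norm_sq_eq_finrank_div_four_add (hs : IsHalfCharacteristic L s)
    (hL : dualLattice L = L) : ∃ m : ℤ, ‖s‖ ^ 2 = Module.finrank ℝ E / 4 + 2 * (m : ℝ) := by
  have h := (hs.thetaSeries_T_smul hL I).symm.trans ((hs.isThetaTriple hL).T₂ I)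
  replace h := mul_right_cancel₀ (isThetaExponent_norm_add_sq L s).thetaSeries_I_ne_zero h
  rw [← Complex.exp_nat_mul, Complex.exp_eq_exp_iff_exists_int] at h
  obtain ⟨m, hm⟩ := h
  refine ⟨m, ?_⟩
  have hpiI : (Real.pi : ℂ) * Complex.I ≠ 0 :=
    mul_ne_zero (mod_cast Real.pi_ne_zero) Complex.I_ne_zero
  have hC : ((‖s‖ ^ 2 : ℝ) : ℂ) = (Module.finrank ℝ E / 4 + 2 * m : ℝ) :=
    mul_left_cancel₀ hpiI (hm.trans (by push_cast; ring))
  exact Complex.ofReal_injective hC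

lemma exists_norm_add_sq_eq_finrank_div_four_add (hs : IsHalfCharacteristic L s)
    (hL : dualLattice L = L) {x : E} (hx : x ∈ L) :
    ∃ m : ℤ, ‖s + x‖ ^ 2 = Module.finrank ℝ E / 4 + 2 * (m : ℝ) := by
  obtain ⟨k, hk⟩ := hs.exists_norm_add_sq_eq hL hx
  obtain ⟨l, hl⟩ := hs.exists_norm_sq_eq_finrank_div_four_add hL
  refine ⟨k + l, ?_⟩
  rw [hk, hl]
  push_cast
  ring

end IsHalfCharacteristic

end SelfDual

/-- The nome `q = e^{πiτ}`, the local parameter at `∞` in which theta series are expanded. -/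
def nome (τ : ℍ) : ℂ :=
  Complex.exp (Real.pi * Complex.I * τ)

/-- The fourth root `e^{πiτ/4}` of the nome. -/
def quarterNome (τ : ℍ) : ℂ :=
  Complex.exp (Real.pi * Complex.I * τ / 4)

lemma quarterNome_ne_zero (τ : ℍ) : quarterNome τ ≠ 0 :=
  Complex.exp_ne_zero _

lemma quarterNome_pow_four (τ : ℍ) : quarterNome τ ^ 4 = nome τ := by
  rw [quarterNome, nome, ← Complex.exp_nat_mul]
  congr 1
  push_cast
  ring

lemma exp_pi_mul_I_mul_div_four (τ : ℍ) (k : ℕ) :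
    Complex.exp (Real.pi * Complex.I * τ * (k / 4 : ℝ)) = quarterNome τ ^ k := by
  rw [quarterNome, ← Complex.exp_nat_mul]
  congr 1
  push_cast
  ring

lemma norm_quarterNome_pow (τ : ℍ) (k : ℕ) :
    ‖quarterNome τ ^ k‖ = Real.exp (-(Real.pi * (k / 4)) * τ.im) := by
  rw [← exp_pi_mul_I_mul_div_four, norm_exp_pi_mul_I_mul, coe_im]

lemma nome_ne_zero (τ : ℍ) : nome τ ≠ 0 :=
  Complex.exp_ne_zero _

lemma nome_T_smul (τ : ℍ) : nome (ModularGroup.T • τ) = -nome τ := by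
  rw [nome, nome, coe_modular_T_smul, mul_add, mul_one, Complex.exp_add, Complex.exp_pi_mul_I,
    mul_neg_one]

lemma tendsto_nome_atImInfty : Tendsto nome atImInfty (𝓝 0) := by
  rw [tendsto_zero_iff_norm_tendsto_zero]
  have h : Tendsto (fun τ : ℍ ↦ -(Real.pi * τ.im)) atImInfty atBot :=
    tendsto_neg_atTop_atBot.comp (tendsto_comap.const_mul_atTop Real.pi_pos)
  refine (Real.tendsto_exp_atBot.comp h).congr fun τ ↦ ?_
  rw [← quarterNome_pow_four, norm_quarterNome_pow, Function.comp_apply]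
  norm_num

lemma HasCubicExpansion.comp_modular_T_smul {f : ℍ → ℂ} {a b c d : ℂ}
    (hf : HasCubicExpansion atImInfty nome f a b c d) :
    HasCubicExpansion atImInfty nome (fun τ ↦ f (ModularGroup.T • τ)) a (-b) c (-d) := by
  refine (IsBigO.comp_tendsto hf tendsto_modular_T_smul_atImInfty).congr (fun τ ↦ ?_) fun τ ↦ ?_
  · simp only [Function.comp_apply, nome_T_smul]
    ring
  · simp only [Function.comp_apply, nome_T_smul]
    ring

lemma isBigO_exp_iff_isBigO_quarterNome_pow {l : Filter ℍ} {f : ℍ → ℂ} {k : ℕ} :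
    (f =O[l] fun τ ↦ Real.exp (-(Real.pi * (k / 4)) * τ.im)) ↔
      f =O[l] fun τ ↦ quarterNome τ ^ k := by
  simp only [← norm_quarterNome_pow, isBigO_norm_right]

lemma IsThetaExponent.hasCubicExpansion {ι : Type*} {N : ι → ℝ} (hN : IsThetaExponent N)
    {k : ℕ} (h : ∀ i, ∃ j : ℕ, N i = k / 4 + j) :
    HasCubicExpansion atImInfty nome (thetaSeries N / quarterNome ^ k)
      {i | N i = k / 4}.ncard {i | N i = k / 4 + 1}.ncard {i | N i = k / 4 + 2}.ncard
      {i | N i = k / 4 + 3}.ncard := by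
  have hM (i : ι) (hi : N i ∉ (Finset.range 4).image fun j : ℕ ↦ (k / 4 + j : ℝ)) :
      ((k + 16 : ℕ) / 4 : ℝ) ≤ N i := by
    obtain ⟨j, hj⟩ := h i
    have h4 : 4 ≤ j := by simpa [hj] using hi
    have h4' : (4 : ℝ) ≤ j := mod_cast h4
    rw [hj]
    push_cast
    linarith
  have hexp (τ : ℍ) (j : ℕ) : Complex.exp (Real.pi * Complex.I * τ * (k / 4 + j : ℝ)) =
      quarterNome τ ^ k * nome τ ^ j := by
    rw [← quarterNome_pow_four, ← pow_mul, ← pow_add, ← exp_pi_mul_I_mul_div_four]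
    congr 3
    push_cast
    ring
  refine ((isBigO_exp_iff_isBigO_quarterNome_pow.1 (hN.thetaSeries_sub_sum_ncard_isBigO hM)).mul
    (isBigO_refl (fun τ ↦ (quarterNome τ ^ k)⁻¹) _)).congr (fun τ ↦ ?_) fun τ ↦ ?_
  · rw [Finset.sum_image fun i _ j _ hij ↦ Nat.cast_injective (add_left_cancel hij)]
    simp only [hexp, Finset.sum_range_succ, Finset.sum_range_zero, Pi.div_apply, Pi.pow_apply,
      Nat.cast_zero, Nat.cast_one, Nat.cast_ofNat, add_zero]
    rw [sub_mul, ← div_eq_mul_inv, sub_right_inj,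
      mul_inv_eq_iff_eq_mul₀ (pow_ne_zero k (quarterNome_ne_zero τ))]
    ring
  · rw [pow_add, mul_comm, inv_mul_cancel_left₀ (pow_ne_zero _ (quarterNome_ne_zero τ)),
      ← quarterNome_pow_four, ← pow_mul]

lemma thetaSeries_comp_equiv {ι κ : Type*} (N : ι → ℝ) (e : κ ≃ ι) :
    thetaSeries (N ∘ e) = thetaSeries N :=
  funext fun τ ↦ e.tsum_eq fun i ↦ Complex.exp (Real.pi * Complex.I * τ * N i)

section ThetaConstants

/-- Jacobi's theta constant `θ₃ = ∑ q^(n²)`, the theta series of the lattice `ℤ`. -/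
def thetaConst₃ : ℍ → ℂ :=
  thetaSeries fun n : ℤ ↦ (n : ℝ) ^ 2

/-- Jacobi's theta constant `θ₄ = ∑ (-1)ⁿ q^(n²)`, encoded as `θ₃(τ + 1)`. -/
def thetaConst₄ (τ : ℍ) : ℂ :=
  thetaConst₃ (ModularGroup.T • τ)

/-- Jacobi's theta constant `θ₂ = ∑ q^((n + 1/2)²)`, the theta series of the shadow `1/2 + ℤ` of
the lattice `ℤ`. -/
def thetaConst₂ : ℍ → ℂ :=
  thetaSeries fun n : ℤ ↦ (1 / 2 + n : ℝ) ^ 2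

/-- The lattice `ℤ` in `ℝ`. -/
def intLattice : Submodule ℤ ℝ :=
  LinearMap.range (Algebra.linearMap ℤ ℝ)

/-- The coordinate of a point of the lattice `ℤ`. -/
def intLatticeEquiv : ℤ ≃ intLattice :=
  (LinearEquiv.ofInjective (Algebra.linearMap ℤ ℝ) Int.cast_injective).toEquiv

lemma dualLattice_intLattice : dualLattice intLattice = intLattice := by
  ext x
  simp only [mem_dualLattice, intLattice, LinearMap.mem_range, Algebra.linearMap_apply,
    algebraMap_int_eq, eq_intCast, forall_exists_index, forall_apply_eq_imp_iff]
  constructor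
  · intro h
    obtain ⟨m, hm⟩ := h 1
    exact ⟨m, by simpa using hm.symm⟩
  · rintro ⟨m, rfl⟩ n
    exact ⟨n * m, by simp [mul_comm]⟩

lemma isHalfCharacteristic_intLattice : IsHalfCharacteristic intLattice (1 / 2 : ℝ) := by
  rintro _ ⟨n, rfl⟩
  obtain ⟨t, ht⟩ := Int.even_mul_pred_self n
  refine ⟨-t, ?_⟩
  rify at ht
  simp only [Algebra.linearMap_apply, algebraMap_int_eq, eq_intCast, one_div,
    RCLike.inner_apply, map_intCast, Real.norm_eq_abs, sq_abs, Int.cast_neg]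
  linarith

instance : DiscreteTopology intLattice :=
  discreteTopology_of_dualLattice_eq dualLattice_intLattice

instance : IsZLattice ℝ intLattice :=
  isZLattice_of_dualLattice_eq dualLattice_intLattice

lemma norm_add_sq_comp_intLatticeEquiv (s : ℝ) :
    (fun x : intLattice ↦ ‖s + (x : ℝ)‖ ^ 2) ∘ intLatticeEquiv = fun n : ℤ ↦ (s + n) ^ 2 := by
  ext n
  rw [Function.comp_apply, Real.norm_eq_abs, sq_abs]
  rfl

lemma isThetaExponent_add_intCast_sq (s : ℝ) : IsThetaExponent fun n : ℤ ↦ (s + n) ^ 2 :=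
  norm_add_sq_comp_intLatticeEquiv s ▸
    (isThetaExponent_norm_add_sq intLattice s).comp_injective intLatticeEquiv.injective

lemma isThetaExponent_intCast_sq : IsThetaExponent fun n : ℤ ↦ (n : ℝ) ^ 2 := by
  simpa using isThetaExponent_add_intCast_sq 0

lemma thetaSeries_intLattice (s : ℝ) :
    thetaSeries (fun x : intLattice ↦ ‖s + (x : ℝ)‖ ^ 2) =
      thetaSeries fun n : ℤ ↦ (s + n) ^ 2 := by
  rw [← norm_add_sq_comp_intLatticeEquiv, thetaSeries_comp_equiv]

lemma isThetaTriple_thetaConst : IsThetaTriple 1 thetaConst₃ thetaConst₄ thetaConst₂ := by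
  have h₃ : thetaSeries (fun x : intLattice ↦ ‖(x : ℝ)‖ ^ 2) = thetaConst₃ := by
    simpa [thetaConst₃] using thetaSeries_intLattice 0
  have h := isHalfCharacteristic_intLattice.isThetaTriple dualLattice_intLattice
  rwa [h₃, thetaSeries_intLattice, Module.finrank_self] at h

lemma ncard_intCast_sq_eq (j : ℕ) (hj : j < 4) :
    {n : ℤ | (n : ℝ) ^ 2 = j}.ncard = if j = 0 then 1 else if j = 1 then 2 else 0 := by
  have hset : {n : ℤ | (n : ℝ) ^ 2 = j} = ({n ∈ Finset.Icc (-1) 1 | n ^ 2 = j} : Finset ℤ) := by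
    ext n
    have hiff : (n : ℝ) ^ 2 = j ↔ n ^ 2 = j := by norm_cast
    simp only [Set.mem_ofPred_eq, hiff, Finset.coe_filter, Finset.mem_Icc]
    exact ⟨fun h ↦ ⟨by constructor <;> by_contra! <;> nlinarith, h⟩, And.right⟩
  rw [hset, Set.ncard_coe_finset]
  interval_cases j <;> rfl

lemma ncard_half_add_intCast_sq_eq (j : ℕ) (hj : j < 4) :
    {n : ℤ | (1 / 2 + n : ℝ) ^ 2 = 1 / 4 + j}.ncard = if j = 0 ∨ j = 2 then 2 else 0 := by
  have hset : {n : ℤ | (1 / 2 + n : ℝ) ^ 2 = 1 / 4 + j} =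
      ({n ∈ Finset.Icc (-2) 1 | n * (n + 1) = j} : Finset ℤ) := by
    ext n
    have hiff : (1 / 2 + n : ℝ) ^ 2 = 1 / 4 + j ↔ n * (n + 1) = j := by
      rify
      constructor <;> intro h <;> linear_combination h
    simp only [Set.mem_ofPred_eq, hiff, Finset.coe_filter, Finset.mem_Icc]
    exact ⟨fun h ↦ ⟨by constructor <;> by_contra! <;> nlinarith, h⟩, And.right⟩
  rw [hset, Set.ncard_coe_finset]
  interval_cases j <;> rfl

lemma hasCubicExpansion_thetaConst₃ :
    HasCubicExpansion atImInfty nome thetaConst₃ 1 2 0 0 := by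
  have h := isThetaExponent_intCast_sq.hasCubicExpansion (k := 0)
    fun n ↦ ⟨n.natAbs ^ 2, by simp⟩
  have h0 := ncard_intCast_sq_eq 0 (by norm_num)
  have h1 := ncard_intCast_sq_eq 1 (by norm_num)
  have h2 := ncard_intCast_sq_eq 2 (by norm_num)
  have h3 := ncard_intCast_sq_eq 3 (by norm_num)
  simp only [Nat.cast_zero, Nat.cast_one, Nat.cast_ofNat] at h0 h1 h2 h3
  simpa [thetaConst₃, h0, h1, h2, h3, -sq_eq_one_iff] using h

lemma hasCubicExpansion_thetaConst₄ :
    HasCubicExpansion atImInfty nome thetaConst₄ 1 (-2) 0 0 := by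
  have h := hasCubicExpansion_thetaConst₃.comp_modular_T_smul
  rwa [neg_zero] at h

lemma hasCubicExpansion_thetaConst₂_div :
    HasCubicExpansion atImInfty nome (thetaConst₂ / quarterNome) 2 0 2 0 := by
  have h := (isThetaExponent_add_intCast_sq (1 / 2)).hasCubicExpansion (k := 1) fun n ↦ by
    obtain ⟨m, hm⟩ := Int.eq_ofNat_of_zero_le (show 0 ≤ n * (n + 1) by
      rcases lt_or_ge n 0 with h | h <;> nlinarith)
    rify at hm
    exact ⟨m, by push_cast; linear_combination hm⟩
  have h0 := ncard_half_add_intCast_sq_eq 0 (by norm_num)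
  have h1 := ncard_half_add_intCast_sq_eq 1 (by norm_num)
  have h2 := ncard_half_add_intCast_sq_eq 2 (by norm_num)
  have h3 := ncard_half_add_intCast_sq_eq 3 (by norm_num)
  simp only [Nat.cast_zero, Nat.cast_one, Nat.cast_ofNat, add_zero] at h0 h1 h2 h3
  simpa [thetaConst₂, h0, h1, h2, h3, -one_div] using h

end ThetaConstants

section Gleason

/-- The form `Δ₈ = θ₂⁴θ₄⁴ / 16` of weight `4`; together with `θ₃` it generates the ring of theta
series of odd unimodular lattices. -/
def deltaEight₃ : ℍ → ℂ :=
  (1 / 16 : ℂ) • (thetaConst₂ ^ 4 * thetaConst₄ ^ 4)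

/-- The translate of `Δ₈` by `T`. -/
def deltaEight₄ : ℍ → ℂ :=
  (1 / 16 : ℂ) • -(thetaConst₂ ^ 4 * thetaConst₃ ^ 4)

/-- The shadow of `Δ₈`, that is, its transform at the cusp `1`. -/
def deltaEight₂ : ℍ → ℂ :=
  (1 / 16 : ℂ) • -(thetaConst₃ ^ 4 * thetaConst₄ ^ 4)

lemma isThetaTriple_deltaEight : IsThetaTriple 8 deltaEight₃ deltaEight₄ deltaEight₂ :=
  (isThetaTriple_thetaConst.pow_four_mul_pow_four odd_one).const_smul _

/-- The weight `37/2` polynomial in `t = θ` and `u = Δ₈` whose `θ₃`-expansion is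
`1 + A q³ + O(q⁴)` and whose shadow has the leading term `r q^(5/4)`. -/
def gleasonForm (A r : ℂ) (t u : ℍ → ℂ) : ℍ → ℂ :=
  t ^ 37 + (-74 : ℂ) • (t ^ 29 * u) + (1036 : ℂ) • (t ^ 21 * u ^ 2) +
    (A - 1184) • (t ^ 13 * u ^ 3) + (2048 * r) • (t ^ 5 * u ^ 4)

lemma isThetaTriple_gleasonForm {t₃ t₄ t₂ u₃ u₄ u₂ : ℍ → ℂ} (ht : IsThetaTriple 1 t₃ t₄ t₂)
    (hu : IsThetaTriple 8 u₃ u₄ u₂) (A r : ℂ) :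
    IsThetaTriple 37 (gleasonForm A r t₃ u₃) (gleasonForm A r t₄ u₄) (gleasonForm A r t₂ u₂) :=
  (((((ht.pow 37).add (((ht.pow 29).mul hu).const_smul _)).add
    (((ht.pow 21).mul (hu.pow 2)).const_smul _)).add
    (((ht.pow 13).mul (hu.pow 3)).const_smul _)).add
    (((ht.pow 5).mul (hu.pow 4)).const_smul _))

/-- The normalisation `θ₂ / (2 q^(1/4)) = 1 + q² + O(q⁴)`. -/
def thetaConst₂Normalized : ℍ → ℂ :=
  (1 / 2 : ℂ) • (thetaConst₂ / quarterNome)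

lemma thetaConst₂_eq : thetaConst₂ = (2 : ℂ) • (quarterNome * thetaConst₂Normalized) := by
  ext τ
  have := quarterNome_ne_zero τ
  simp only [thetaConst₂Normalized, Pi.smul_apply, Pi.mul_apply, Pi.div_apply, smul_eq_mul]
  field_simp

lemma hasCubicExpansion_thetaConst₂Normalized :
    HasCubicExpansion atImInfty nome thetaConst₂Normalized 1 0 1 0 := by
  unfold thetaConst₂Normalized
  convert hasCubicExpansion_thetaConst₂_div.const_smul (1 / 2) using 1 <;> norm_num

lemma hasCubicExpansion_deltaEight₃ :
    HasCubicExpansion atImInfty nome deltaEight₃ 0 1 (-8) 28 := by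
  have hx := tendsto_nome_atImInfty
  have heq : deltaEight₃ = nome * (thetaConst₂Normalized ^ 4 * thetaConst₄ ^ 4) := by
    ext τ
    simp only [deltaEight₃, thetaConst₂_eq, Pi.smul_apply, Pi.mul_apply, Pi.pow_apply,
      smul_eq_mul, ← quarterNome_pow_four]
    ring
  rw [heq]
  convert (HasCubicExpansion.param _ _).mul hx
    ((hasCubicExpansion_thetaConst₂Normalized.pow hx 4).mul hx
      (hasCubicExpansion_thetaConst₄.pow hx 4)) using 1 <;> norm_num [Nat.choose]

lemma hasCubicExpansion_deltaEight₃_sq :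
    HasCubicExpansion atImInfty nome (deltaEight₃ ^ 2) 0 0 1 (-16) := by
  rw [sq]
  convert hasCubicExpansion_deltaEight₃.mul tendsto_nome_atImInfty hasCubicExpansion_deltaEight₃
    using 1 <;> norm_num

lemma hasCubicExpansion_deltaEight₃_pow_three :
    HasCubicExpansion atImInfty nome (deltaEight₃ ^ 3) 0 0 0 1 := by
  rw [pow_succ]
  convert hasCubicExpansion_deltaEight₃_sq.mul tendsto_nome_atImInfty
    hasCubicExpansion_deltaEight₃ using 1 <;> norm_num

lemma hasCubicExpansion_deltaEight₃_pow_four :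
    HasCubicExpansion atImInfty nome (deltaEight₃ ^ 4) 0 0 0 0 := by
  rw [pow_succ]
  convert hasCubicExpansion_deltaEight₃_pow_three.mul tendsto_nome_atImInfty
    hasCubicExpansion_deltaEight₃ using 1 <;> norm_num

lemma hasCubicExpansion_gleasonForm (A r : ℂ) :
    HasCubicExpansion atImInfty nome (gleasonForm A r thetaConst₃ deltaEight₃) 1 0 0 A := by
  have hx := tendsto_nome_atImInfty
  unfold gleasonForm
  have hpow := hasCubicExpansion_thetaConst₃.pow hx
  convert ((((hpow 37).add
    (((hpow 29).mul hx hasCubicExpansion_deltaEight₃).const_smul (-74))).add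
    (((hpow 21).mul hx hasCubicExpansion_deltaEight₃_sq).const_smul 1036)).add
    (((hpow 13).mul hx hasCubicExpansion_deltaEight₃_pow_three).const_smul (A - 1184))).add
    (((hpow 5).mul hx hasCubicExpansion_deltaEight₃_pow_four).const_smul (2048 * r))
    using 1 <;> norm_num [Nat.choose]

/-- The terms of order at least `q⁴` of the shadow `gleasonForm A r θ₂ Δ₈` relative to `q^(5/4)`,
divided by `q⁴`. They do not depend on `A` and `r`. -/
def gleasonShadowTail : ℍ → ℂ :=
  (1036 * 2 ^ 13 : ℂ) • (thetaConst₂Normalized ^ 21 * (thetaConst₃ * thetaConst₄) ^ 8) +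
    (74 * 2 ^ 25 : ℂ) •
      (nome * nome * (thetaConst₂Normalized ^ 29 * (thetaConst₃ * thetaConst₄) ^ 4)) +
    (2 ^ 37 : ℂ) • (nome * nome * (nome * nome) * thetaConst₂Normalized ^ 37)

/-- The shadow `gleasonForm A r θ₂ Δ₈` divided by `q^(5/4)`. -/
def gleasonShadow (A r : ℂ) : ℍ → ℂ :=
  r • (thetaConst₂Normalized ^ 5 * (thetaConst₃ * thetaConst₄) ^ 16) +
    (-2 * (A - 1184)) •
      (nome * nome * (thetaConst₂Normalized ^ 13 * (thetaConst₃ * thetaConst₄) ^ 12)) +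
    nome * nome * (nome * nome) * gleasonShadowTail

lemma gleasonForm_thetaConst₂ (A r : ℂ) :
    gleasonForm A r thetaConst₂ deltaEight₂ = quarterNome ^ 5 * gleasonShadow A r := by
  ext τ
  simp only [gleasonForm, gleasonShadow, gleasonShadowTail, deltaEight₂, thetaConst₂_eq,
    Pi.add_apply, Pi.neg_apply, Pi.smul_apply, Pi.mul_apply, Pi.pow_apply, smul_eq_mul,
    ← quarterNome_pow_four]
  ring

lemma hasCubicExpansion_nome_mul_nome :
    HasCubicExpansion atImInfty nome (nome * nome) 0 0 1 0 := by
  convert (HasCubicExpansion.param _ _).mul tendsto_nome_atImInfty (HasCubicExpansion.param _ _)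
    using 1 <;> norm_num

lemma hasCubicExpansion_thetaConst₂Normalized_pow_mul (k l : ℕ) :
    HasCubicExpansion atImInfty nome
      (thetaConst₂Normalized ^ k * (thetaConst₃ * thetaConst₄) ^ l) 1 0 (k - 4 * l) 0 := by
  have hx := tendsto_nome_atImInfty
  have h₃₄ : HasCubicExpansion atImInfty nome (thetaConst₃ * thetaConst₄) 1 0 (-4) 0 := by
    convert hasCubicExpansion_thetaConst₃.mul hx hasCubicExpansion_thetaConst₄ using 1 <;>
      norm_num
  convert (hasCubicExpansion_thetaConst₂Normalized.pow hx k).mul hx (h₃₄.pow hx l) using 1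
  · simp
  · simp
  · ring
  · simp

lemma hasCubicExpansion_gleasonShadowTail :
    HasCubicExpansion atImInfty nome gleasonShadowTail (1036 * 2 ^ 13) 0
      (74 * 2 ^ 25 - 1036 * 2 ^ 13 * 11) 0 := by
  unfold gleasonShadowTail
  have hx := tendsto_nome_atImInfty
  have hx₂ := hasCubicExpansion_nome_mul_nome
  convert ((((hasCubicExpansion_thetaConst₂Normalized_pow_mul 21 8).const_smul (1036 * 2 ^ 13)).add
    ((hx₂.mul hx (hasCubicExpansion_thetaConst₂Normalized_pow_mul 29 4)).const_smul
      (74 * 2 ^ 25))).add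
    (((hx₂.mul hx hx₂).mul hx
      (hasCubicExpansion_thetaConst₂Normalized.pow hx 37)).const_smul (2 ^ 37))) using 1 <;>
    norm_num

lemma hasCubicExpansion_gleasonShadow (A r : ℂ) :
    HasCubicExpansion atImInfty nome (gleasonShadow A r) r 0 (-59 * r - 2 * (A - 1184)) 0 := by
  unfold gleasonShadow
  have hx := tendsto_nome_atImInfty
  have hx₂ := hasCubicExpansion_nome_mul_nome
  convert (((hasCubicExpansion_thetaConst₂Normalized_pow_mul 5 16).const_smul r).add
    ((hx₂.mul hx (hasCubicExpansion_thetaConst₂Normalized_pow_mul 13 12)).const_smul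
      (-2 * (A - 1184)))).add
    ((hx₂.mul hx hx₂).mul hx hasCubicExpansion_gleasonShadowTail) using 1
  · simp
  · simp
  · push_cast
    ring
  · simp

variable {f₃ f₄ f₂ : ℍ → ℂ} {A r c d : ℂ}

-- The difference of the two triples vanishes to order `q⁴` and `q^(9/4)` at the two cusps.
lemma IsThetaTriple.div_quarterNome_pow_five_eq (hf : IsThetaTriple 37 f₃ f₄ f₂)
    (h₃ : HasCubicExpansion atImInfty nome f₃ 1 0 0 A)
    (h₂ : HasCubicExpansion atImInfty nome (f₂ / quarterNome ^ 5) r 0 c d) :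
    f₂ / quarterNome ^ 5 = gleasonShadow A r := by
  have hx := tendsto_nome_atImInfty
  have hw (τ : ℍ) := pow_ne_zero 5 (quarterNome_ne_zero τ)
  have hdiff := hf.sub
    (isThetaTriple_gleasonForm isThetaTriple_thetaConst isThetaTriple_deltaEight A r)
  have hO₃ : (f₃ - gleasonForm A r thetaConst₃ deltaEight₃) =O[atImInfty]
      fun τ ↦ Real.exp (-(Real.pi * ((16 : ℕ) / 4)) * τ.im) := by
    rw [isBigO_exp_iff_isBigO_quarterNome_pow]
    refine IsBigO.congr (h₃.sub (hasCubicExpansion_gleasonForm A r)) (fun τ ↦ by simp) fun τ ↦ ?_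
    rw [← quarterNome_pow_four, ← pow_mul]
  have hO₂ : (f₂ - gleasonForm A r thetaConst₂ deltaEight₂) =O[atImInfty]
      fun τ ↦ Real.exp (-(Real.pi * ((9 : ℕ) / 4)) * τ.im) := by
    rw [isBigO_exp_iff_isBigO_quarterNome_pow]
    have h := h₂.sub (hasCubicExpansion_gleasonShadow A r)
    rw [sub_self, sub_self] at h
    refine ((h.isBigO_param hx).mul (isBigO_refl (fun τ ↦ quarterNome τ ^ 5) _)).congr
      (fun τ ↦ ?_) fun τ ↦ ?_
    · rw [gleasonForm_thetaConst₂]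
      simp only [Pi.sub_apply, Pi.div_apply, Pi.mul_apply, Pi.pow_apply]
      rw [sub_mul, div_mul_cancel₀ _ (hw τ), mul_comm (gleasonShadow A r τ)]
    · rw [← quarterNome_pow_four, ← pow_add]
  have heq := sub_eq_zero.1 (hdiff.eq_zero_of_isBigO (by norm_num) hO₃ hO₂)
  rw [heq, gleasonForm_thetaConst₂]
  ext τ
  exact mul_div_cancel_left₀ _ (hw τ)

lemma IsThetaTriple.coeff_eq (hf : IsThetaTriple 37 f₃ f₄ f₂)
    (h₃ : HasCubicExpansion atImInfty nome f₃ 1 0 0 A)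
    (h₂ : HasCubicExpansion atImInfty nome (f₂ / quarterNome ^ 5) r 0 c d) :
    c = -59 * r - 2 * (A - 1184) := by
  have h := hasCubicExpansion_gleasonShadow A r
  rw [← hf.div_quarterNome_pow_five_eq h₃ h₂] at h
  exact (h₂.unique tendsto_nome_atImInfty (.of_forall nome_ne_zero) h).2.2.1

lemma IsThetaTriple.tendsto_div_quarterNome_pow (hf : IsThetaTriple 37 f₃ f₄ f₂)
    (h₃ : HasCubicExpansion atImInfty nome f₃ 1 0 0 1184)
    (h₂ : HasCubicExpansion atImInfty nome (f₂ / quarterNome ^ 5) 0 0 c d) :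
    Tendsto (f₂ / quarterNome ^ 21) atImInfty (𝓝 (1036 * 2 ^ 13)) := by
  refine (hasCubicExpansion_gleasonShadowTail.tendsto tendsto_nome_atImInfty).congr fun τ ↦ ?_
  have h := congr_fun (hf.div_quarterNome_pow_five_eq h₃ h₂) τ
  have hw := quarterNome_ne_zero τ
  simp only [gleasonShadow, Pi.div_apply, Pi.add_apply, Pi.mul_apply, Pi.pow_apply, zero_smul,
    sub_self, mul_zero, zero_add, ← quarterNome_pow_four] at h ⊢
  rw [div_eq_iff (pow_ne_zero _ hw)] at h
  rw [eq_div_iff (pow_ne_zero _ hw), h, Pi.zero_apply]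
  ring

end Gleason

section DimensionThirtySeven

variable {E : Type*} [NormedAddCommGroup E] [InnerProductSpace ℝ E] {L : Submodule ℤ E}

lemma hasCubicExpansion_thetaSeries_norm_sq [DiscreteTopology L] (hL : dualLattice L = L)
    (hmin : ∀ x ∈ L, x ≠ 0 → 3 ≤ ‖x‖ ^ 2) [FiniteDimensional ℝ E] :
    HasCubicExpansion atImInfty nome (thetaSeries fun x : L ↦ ‖(x : E)‖ ^ 2) 1 0 0
      {x : L | ‖(x : E)‖ ^ 2 = 3}.ncard := by
  have h := (isThetaExponent_norm_sq L).hasCubicExpansion (k := 0) fun x ↦ by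
    obtain ⟨m, hm⟩ := exists_norm_sq_eq_intCast hL x.2
    have h0 : 0 ≤ m := by
      rify
      exact hm ▸ sq_nonneg _
    lift m to ℕ using h0
    exact ⟨m, by simpa using hm⟩
  have h0 : {x : L | ‖(x : E)‖ ^ 2 = 0} = {0} := by
    ext x
    simp
  have hempty (v : ℝ) (hv₀ : v ≠ 0) (hv : v < 3) : {x : L | ‖(x : E)‖ ^ 2 = v} = ∅ := by
    refine Set.eq_empty_of_forall_notMem fun x (hx : ‖(x : E)‖ ^ 2 = v) ↦ ?_
    have hx₀ : (x : E) ≠ 0 := fun h ↦ hv₀ (by simp [← hx, h])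
    linarith [hmin x x.2 hx₀]
  simpa [h0, hempty 1 (by norm_num) (by norm_num), hempty 2 (by norm_num) (by norm_num),
    -sq_eq_one_iff] using h

namespace IsHalfCharacteristic

variable [FiniteDimensional ℝ E] [DiscreteTopology L] [IsZLattice ℝ L] {s : E}

lemma exists_norm_add_sq_eq_five_div_four_add (hs : IsHalfCharacteristic L s)
    (hL : dualLattice L = L) (hdim : Module.finrank ℝ E = 37) (x : L) :
    ∃ j : ℕ, ‖s + x‖ ^ 2 = 5 / 4 + 2 * (j : ℝ) := by
  obtain ⟨m, hm⟩ := hs.exists_norm_add_sq_eq_finrank_div_four_add hL x.2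
  rw [hdim] at hm
  have hpos : -5 < m := by
    have : (-5 : ℝ) < m := by
      push_cast at hm
      linarith [sq_nonneg ‖s + x‖]
    exact_mod_cast this
  obtain ⟨j, hj⟩ := Int.eq_ofNat_of_zero_le (show 0 ≤ m + 4 by omega)
  refine ⟨j, ?_⟩
  rify at hj
  rw [hm]
  push_cast
  linarith

lemma hasCubicExpansion_thetaSeries_div (hs : IsHalfCharacteristic L s)
    (hL : dualLattice L = L) (hdim : Module.finrank ℝ E = 37) :
    HasCubicExpansion atImInfty nome
      ((thetaSeries fun x : L ↦ ‖s + x‖ ^ 2) / quarterNome ^ 5)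
      {x : L | ‖s + x‖ ^ 2 = 5 / 4}.ncard 0 {x : L | ‖s + x‖ ^ 2 = 13 / 4}.ncard
      {x : L | ‖s + x‖ ^ 2 = 17 / 4}.ncard := by
  have hnorm := hs.exists_norm_add_sq_eq_five_div_four_add hL hdim
  have h := (isThetaExponent_norm_add_sq L s).hasCubicExpansion (k := 5) fun x ↦ by
    obtain ⟨j, hj⟩ := hnorm x
    exact ⟨2 * j, by rw [hj]; push_cast; ring⟩
  have hempty : {x : L | ‖s + x‖ ^ 2 = 9 / 4} = ∅ := by
    refine Set.eq_empty_of_forall_notMem fun x (hx : ‖s + x‖ ^ 2 = 9 / 4) ↦ ?_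
    obtain ⟨j, hj⟩ := hnorm x
    have : 2 * j = 1 := by
      rify
      linarith
    omega
  convert h using 2 <;> norm_num [hempty]

lemma ncard_norm_add_sq_eq (hs : IsHalfCharacteristic L s) (hL : dualLattice L = L)
    (hdim : Module.finrank ℝ E = 37) (hmin : ∀ x ∈ L, x ≠ 0 → 3 ≤ ‖x‖ ^ 2) :
    ({x : L | ‖s + x‖ ^ 2 = 13 / 4}.ncard : ℤ) =
      -59 * {x : L | ‖s + x‖ ^ 2 = 5 / 4}.ncard -
        2 * ({x : L | ‖(x : E)‖ ^ 2 = 3}.ncard - 1184) := by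
  have h := (hdim ▸ hs.isThetaTriple hL).coeff_eq
    (hasCubicExpansion_thetaSeries_norm_sq hL hmin)
    (hs.hasCubicExpansion_thetaSeries_div hL hdim)
  exact_mod_cast h

lemma ncard_norm_sq_eq_three_iff (hs : IsHalfCharacteristic L s) (hL : dualLattice L = L)
    (hdim : Module.finrank ℝ E = 37) (hmin : ∀ x ∈ L, x ≠ 0 → 3 ≤ ‖x‖ ^ 2) :
    {x : L | ‖(x : E)‖ ^ 2 = 3}.ncard = 1184 ↔ ∀ x : L, 21 / 4 ≤ ‖s + x‖ ^ 2 := by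
  have hrel := hs.ncard_norm_add_sq_eq hL hdim hmin
  have hzero (v : ℝ) : {x : L | ‖s + x‖ ^ 2 = v}.ncard = 0 ↔ ∀ x : L, ‖s + x‖ ^ 2 ≠ v := by
    rw [Set.ncard_eq_zero ((isThetaExponent_norm_add_sq L s).finite_eq v),
      Set.eq_empty_iff_forall_notMem]
    rfl
  calc {x : L | ‖(x : E)‖ ^ 2 = 3}.ncard = 1184
      ↔ {x : L | ‖s + x‖ ^ 2 = 5 / 4}.ncard = 0 ∧ {x : L | ‖s + x‖ ^ 2 = 13 / 4}.ncard = 0 := by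
        omega
    _ ↔ ∀ x : L, ‖s + x‖ ^ 2 ≠ 5 / 4 ∧ ‖s + x‖ ^ 2 ≠ 13 / 4 := by
        rw [hzero, hzero, forall_and]
    _ ↔ ∀ x : L, 21 / 4 ≤ ‖s + x‖ ^ 2 := forall_congr' fun x ↦ by
        obtain ⟨j, hj⟩ := hs.exists_norm_add_sq_eq_five_div_four_add hL hdim x
        rw [hj]
        refine ⟨fun ⟨h0, h1⟩ ↦ ?_, fun h ↦ ⟨by linarith, by linarith⟩⟩
        have hj2 : 2 ≤ j := by
          by_contra! hj2
          interval_cases j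
          · norm_num at h0
          · norm_num at h1
        rify at hj2
        linarith

-- The theta series of the shadow has leading term `1036 * 2 ^ 13 * q^(21/4)`.
lemma exists_norm_add_sq_eq_of_forall_le (hs : IsHalfCharacteristic L s)
    (hL : dualLattice L = L) (hdim : Module.finrank ℝ E = 37)
    (hmin : ∀ x ∈ L, x ≠ 0 → 3 ≤ ‖x‖ ^ 2) (hle : ∀ x : L, 21 / 4 ≤ ‖s + x‖ ^ 2) :
    ∃ x : L, ‖s + x‖ ^ 2 = 21 / 4 := by
  have h₃ := hasCubicExpansion_thetaSeries_norm_sq hL hmin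
  rw [(hs.ncard_norm_sq_eq_three_iff hL hdim hmin).2 hle] at h₃
  have h₂ := hs.hasCubicExpansion_thetaSeries_div hL hdim
  have h0 : {x : L | ‖s + x‖ ^ 2 = 5 / 4} = ∅ :=
    Set.eq_empty_of_forall_notMem fun x (hx : ‖s + x‖ ^ 2 = 5 / 4) ↦ by linarith [hle x]
  rw [h0, Set.ncard_empty, Nat.cast_zero] at h₂
  have hlim := (hdim ▸ hs.isThetaTriple hL).tendsto_div_quarterNome_pow h₃ h₂
  have h₂₁ := (isThetaExponent_norm_add_sq L s).hasCubicExpansion (k := 21) fun x ↦ by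
    obtain ⟨j, hj⟩ := hs.exists_norm_add_sq_eq_five_div_four_add hL hdim x
    have hj2 : 2 ≤ j := by
      rify
      linarith [hle x]
    obtain ⟨i, rfl⟩ := Nat.exists_eq_add_of_le hj2
    exact ⟨2 * i, by rw [hj]; push_cast; ring⟩
  have heq := tendsto_nhds_unique (h₂₁.tendsto tendsto_nome_atImInfty) hlim
  refine Set.nonempty_of_ncard_ne_zero (s := {x : L | ‖s + x‖ ^ 2 = 21 / 4}) fun h ↦ ?_
  norm_num [h] at heq

end IsHalfCharacteristic

end DimensionThirtySeven

section Shadow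

variable {n : ℕ}

lemma normOf_eq_norm_sq (x : EuclideanSpace ℝ (Fin n)) : normOf x = ‖x‖ ^ 2 :=
  real_inner_self_eq_norm_sq x

lemma coe_dualLattice_span (L : Set (EuclideanSpace ℝ (Fin n))) :
    (dualLattice (Submodule.span ℤ L) : Set (EuclideanSpace ℝ (Fin n))) = dualSet L := by
  ext x
  refine mem_dualLattice.trans ⟨fun h y hy ↦ h y (Submodule.subset_span hy), fun h y hy ↦ ?_⟩
  induction hy using Submodule.span_induction with
  | mem y hy => exact h y hy
  | zero => exact ⟨0, by simp⟩
  | add y z _ _ hy hz =>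
    obtain ⟨k, hk⟩ := hy
    obtain ⟨l, hl⟩ := hz
    exact ⟨k + l, by rw [inner_add_right, hk, hl, Int.cast_add]⟩
  | smul a y _ hy =>
    obtain ⟨k, hk⟩ := hy
    exact ⟨a * k, by
      rw [← Int.cast_smul_eq_zsmul ℝ, real_inner_smul_right, hk, Int.cast_mul]⟩

lemma IsUnimodularLattice.exists_submodule {L : Set (EuclideanSpace ℝ (Fin n))}
    (hL : IsUnimodularLattice L) :
    ∃ M : Submodule ℤ (EuclideanSpace ℝ (Fin n)), M = L ∧ dualLattice M = M := by
  have hcoe := (coe_dualLattice_span L).trans hL.symm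
  refine ⟨Submodule.span ℤ L, ?_, ?_⟩
  · rw [← hcoe, Submodule.span_eq]
  · apply SetLike.coe_injective
    rw [hcoe, ← hcoe, Submodule.span_eq]

variable {L : Submodule ℤ (EuclideanSpace ℝ (Fin n))} {s v : EuclideanSpace ℝ (Fin n)}

lemma numVecsOfNorm_coe (L : Submodule ℤ (EuclideanSpace ℝ (Fin n))) (r : ℝ) :
    numVecsOfNorm (L : Set (EuclideanSpace ℝ (Fin n))) r =
      {x : L | ‖(x : EuclideanSpace ℝ (Fin n))‖ ^ 2 = r}.ncard := by
  rw [numVecsOfNorm, ← Set.ncard_image_of_injective _ Subtype.val_injective]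
  congr 1
  ext x
  simp [normOf_eq_norm_sq, and_comm]

lemma hasMinNorm_of_numVecsOfNorm_ne_zero {L : Set (EuclideanSpace ℝ (Fin n))} {r : ℝ}
    (hr : r ≠ 0) (hmin : ∀ x ∈ L, x ≠ 0 → r ≤ normOf x) (h : numVecsOfNorm L r ≠ 0) :
    HasMinNorm L r := by
  obtain ⟨x, hx, hxr⟩ := Set.nonempty_of_ncard_ne_zero h
  refine ⟨⟨x, hx, ?_, hxr⟩, ?_⟩
  · rintro rfl
    exact hr (by rw [← hxr, normOf_eq_norm_sq, norm_zero, zero_pow two_ne_zero])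
  · rintro _ ⟨y, hy, hy₀, rfl⟩
    exact hmin y hy hy₀

lemma mem_evenSublattice_coe {x : EuclideanSpace ℝ (Fin n)} :
    x ∈ evenSublattice (L : Set (EuclideanSpace ℝ (Fin n))) ↔
      x ∈ L ∧ ∃ m : ℤ, ‖x‖ ^ 2 = 2 * (m : ℝ) := by
  rw [← normOf_eq_norm_sq]
  rfl

lemma exists_odd_two_mul_inner_of_mem_shadow (hL : dualLattice L = L)
    (hv : v ∈ shadow (L : Set (EuclideanSpace ℝ (Fin n)))) :
    ∃ z ∈ L, ∃ a p : ℤ, Odd a ∧ Odd p ∧ ‖z‖ ^ 2 = a ∧ 2 * ⟪v, z⟫ = p := by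
  obtain ⟨hv, hvL⟩ := hv
  rw [SetLike.mem_coe, ← hL, mem_dualLattice] at hvL
  push Not at hvL
  obtain ⟨z, hz, hvz⟩ := hvL
  obtain ⟨a, ha⟩ := exists_norm_sq_eq_intCast hL hz
  have h2z : (2 : ℤ) • z ∈ evenSublattice (L : Set (EuclideanSpace ℝ (Fin n))) := by
    refine mem_evenSublattice_coe.2 ⟨L.smul_mem 2 hz, 2 * a, ?_⟩
    rw [← Int.cast_smul_eq_zsmul ℝ, norm_smul, mul_pow, ha]
    norm_num
    ring
  obtain ⟨p, hp⟩ := hv _ h2z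
  rw [← Int.cast_smul_eq_zsmul ℝ, real_inner_smul_right, Int.cast_ofNat] at hp
  refine ⟨z, hz, a, p, ?_, ?_, ha, hp⟩ <;> rw [← Int.not_even_iff_odd] <;> rintro ⟨q, rfl⟩
  · obtain ⟨k, hk⟩ := hv z (mem_evenSublattice_coe.2 ⟨hz, q, by rw [ha]; push_cast; ring⟩)
    exact hvz k hk
  · exact hvz q (by push_cast at hp; linarith)

lemma isHalfCharacteristic_of_mem_shadow (hL : dualLattice L = L)
    (hv : v ∈ shadow (L : Set (EuclideanSpace ℝ (Fin n)))) : IsHalfCharacteristic L v := by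
  obtain ⟨z, hz, a, p, ha, hp, hza, hzp⟩ := exists_odd_two_mul_inner_of_mem_shadow hL hv
  intro y hy
  rw [real_inner_comm]
  obtain ⟨b, hb⟩ := exists_norm_sq_eq_intCast hL hy
  rcases Int.even_or_odd b with ⟨q, rfl⟩ | hbodd
  · obtain ⟨k, hk⟩ := hv.1 y (mem_evenSublattice_coe.2 ⟨hy, q, by rw [hb]; push_cast; ring⟩)
    exact ⟨k - q, by rw [hk, hb]; push_cast; ring⟩
  · obtain ⟨j, hj⟩ := exists_inner_eq_intCast hL hy hz
    obtain ⟨q, hq⟩ := hbodd.add_odd ha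
    obtain ⟨t, ht⟩ := hp.sub_odd hbodd
    rify at hq ht
    have hyz : y - z ∈ evenSublattice (L : Set (EuclideanSpace ℝ (Fin n))) :=
      mem_evenSublattice_coe.2 ⟨L.sub_mem hy hz, q - j, by
        rw [norm_sub_sq_real, hb, hza, hj]
        push_cast
        linarith⟩
    obtain ⟨k, hk⟩ := hv.1 _ hyz
    rw [inner_sub_right] at hk
    refine ⟨k + t, ?_⟩
    push_cast
    linarith

lemma IsHalfCharacteristic.mem_shadow (hs : IsHalfCharacteristic L s)
    (hodd : IsOddLattice (L : Set (EuclideanSpace ℝ (Fin n)))) (hL : dualLattice L = L) :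
    s ∈ shadow (L : Set (EuclideanSpace ℝ (Fin n))) := by
  refine ⟨fun y hy ↦ ?_, fun hsL ↦ ?_⟩
  · obtain ⟨hy, q, hq⟩ := mem_evenSublattice_coe.1 hy
    obtain ⟨m, hm⟩ := hs y hy
    exact ⟨q + m, by rw [real_inner_comm, hm, hq]; push_cast; ring⟩
  · obtain ⟨x, hx, a, ⟨b, rfl⟩, ha⟩ := hodd
    rw [normOf_eq_norm_sq] at ha
    obtain ⟨m, hm⟩ := hs x hx
    obtain ⟨j, hj⟩ := exists_inner_eq_intCast hL hx hsL
    have h : 2 * j = 2 * b + 1 + 2 * m := by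
      rify
      rw [← hj, hm, ha]
      push_cast
      ring
    omega

lemma IsHalfCharacteristic.shadow_eq_range (hs : IsHalfCharacteristic L s)
    (hodd : IsOddLattice (L : Set (EuclideanSpace ℝ (Fin n)))) (hL : dualLattice L = L) :
    shadow (L : Set (EuclideanSpace ℝ (Fin n))) = Set.range fun x : L ↦ s + x := by
  ext v
  have hmem : v ∈ shadow (L : Set (EuclideanSpace ℝ (Fin n))) ↔ v - s ∈ L :=
    ⟨fun hv ↦ (hs.iff_sub_mem hL).1 (isHalfCharacteristic_of_mem_shadow hL hv),
      fun hv ↦ ((hs.iff_sub_mem hL).2 hv).mem_shadow hodd hL⟩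
  rw [hmem]
  refine ⟨fun hv ↦ ⟨⟨v - s, hv⟩, add_sub_cancel s v⟩, ?_⟩
  rintro ⟨x, rfl⟩
  exact (add_sub_cancel_left s (x : EuclideanSpace ℝ (Fin n))).symm ▸ x.2

lemma IsHalfCharacteristic.hasSigma_iff (hs : IsHalfCharacteristic L s)
    (hodd : IsOddLattice (L : Set (EuclideanSpace ℝ (Fin n)))) (hL : dualLattice L = L) {r : ℝ} :
    HasSigma (L : Set (EuclideanSpace ℝ (Fin n))) r ↔
      IsLeast (Set.range fun x : L ↦ ‖s + x‖ ^ 2) (r / 4) := by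
  have hset : {t | ∃ x ∈ shadow (L : Set (EuclideanSpace ℝ (Fin n))), normOf x = t} =
      Set.range fun x : L ↦ ‖s + x‖ ^ 2 := by
    ext t
    rw [hs.shadow_eq_range hodd hL, Set.mem_ofPred_eq, Set.exists_range_iff]
    simp only [normOf_eq_norm_sq, Set.mem_range]
  rw [HasSigma, ← hset]
  constructor
  · rintro ⟨t, ht, rfl⟩
    rwa [mul_div_cancel_left₀ t four_ne_zero]
  · exact fun h ↦ ⟨r / 4, h, (mul_div_cancel₀ r four_ne_zero).symm⟩

end Shadow

theorem kissing_number_dim37 {L : Set (EuclideanSpace ℝ (Fin 37))}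
    (huni : IsUnimodularLattice L) (hodd : IsOddLattice L)
    (hmin : ∀ x ∈ L, x ≠ 0 → 3 ≤ normOf x) :
    (HasMinNorm L 3 ∧ numVecsOfNorm L 3 = 1184) ↔ HasSigma L 21 := by
  obtain ⟨L, rfl, hL⟩ := huni.exists_submodule
  have := discreteTopology_of_dualLattice_eq hL
  have := isZLattice_of_dualLattice_eq hL
  obtain ⟨s, hs⟩ := exists_isHalfCharacteristic hL
  have hdim : Module.finrank ℝ (EuclideanSpace ℝ (Fin 37)) = 37 := finrank_euclideanSpace_fin
  have hmin' : ∀ x ∈ L, x ≠ 0 → 3 ≤ ‖x‖ ^ 2 := by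
    simpa only [normOf_eq_norm_sq, SetLike.mem_coe] using hmin
  calc
    _ ↔ numVecsOfNorm (L : Set (EuclideanSpace ℝ (Fin 37))) 3 = 1184 :=
        and_iff_right_of_imp fun h ↦
          hasMinNorm_of_numVecsOfNorm_ne_zero three_ne_zero hmin (by norm_num [h])
    _ ↔ ∀ x : L, 21 / 4 ≤ ‖s + x‖ ^ 2 := by
        rw [numVecsOfNorm_coe, hs.ncard_norm_sq_eq_three_iff hL hdim hmin']
    _ ↔ IsLeast (Set.range fun x : L ↦ ‖s + x‖ ^ 2) (21 / 4) := by
        rw [IsLeast, mem_lowerBounds, Set.forall_mem_range]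
        exact (and_iff_right_of_imp (hs.exists_norm_add_sq_eq_of_forall_le hL hdim hmin')).symm
    _ ↔ HasSigma (L : Set (EuclideanSpace ℝ (Fin 37))) 21 := (hs.hasSigma_iff hodd hL).symm
end
end

section
/- There exists an odd unimodular lattice L in dimension 37 having minimum norm 3 with σ(L) = 21. -/
open scoped RealInnerProductSpace

noncomputable section

/-!
A binary code `B` whose generator matrix can be lifted so that its rows are orthogonal modulo 4 is
the residue code of a self-dual `ℤ₄`-code, and Construction A turns the latter into a unimodular
lattice `L`. Take `B` of length 37 and dimension 6 with weights between 12 and 20 and dual distance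
3. A vector `x / 2` of `L` has norm at least `12 / 4` if `x` is odd somewhere, at least 3 by the
dual distance if `x / 2` is integral and odd somewhere, and at least 4 otherwise. A shadow vector is
`w / 2` where the complement of `w` modulo 2 lies in `B`, so `w` has at least `37 - 20 = 17` odd
entries and the norm is at least `17 / 4`. All norms of shadow vectors are congruent modulo 2, so an
explicit shadow vector of norm `21 / 4` has minimum norm.
-/

section UnimodularLattice

variable {n : ℕ}

theorem normOf_add (x y : EuclideanSpace ℝ (Fin n)) :
    normOf (x + y) = normOf x + 2 * ⟪x, y⟫ + normOf y :=
  real_inner_add_add_self x y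

theorem normOf_sub (x y : EuclideanSpace ℝ (Fin n)) :
    normOf (x - y) = normOf x - 2 * ⟪x, y⟫ + normOf y :=
  real_inner_sub_sub_self x y

namespace IsUnimodularLattice

variable {L : Set (EuclideanSpace ℝ (Fin n))} {s t x y : EuclideanSpace ℝ (Fin n)}

theorem mem_iff (hL : IsUnimodularLattice L) : x ∈ L ↔ ∀ y ∈ L, ∃ m : ℤ, ⟪x, y⟫ = (m : ℝ) :=
  Set.ext_iff.mp hL x

theorem exists_inner_eq_intCast (hL : IsUnimodularLattice L) (hx : x ∈ L) (hy : y ∈ L) :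
    ∃ m : ℤ, ⟪x, y⟫ = (m : ℝ) :=
  hL.mem_iff.mp hx y hy

theorem zero_mem (hL : IsUnimodularLattice L) : 0 ∈ L :=
  hL.mem_iff.mpr fun y _ => ⟨0, by rw [inner_zero_left, Int.cast_zero]⟩

theorem add_mem (hL : IsUnimodularLattice L) (hx : x ∈ L) (hy : y ∈ L) : x + y ∈ L := by
  refine hL.mem_iff.mpr fun z hz => ?_
  obtain ⟨a, ha⟩ := hL.exists_inner_eq_intCast hx hz
  obtain ⟨b, hb⟩ := hL.exists_inner_eq_intCast hy hz
  exact ⟨a + b, by rw [inner_add_left, ha, hb, Int.cast_add]⟩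

theorem neg_mem (hL : IsUnimodularLattice L) (hx : x ∈ L) : -x ∈ L := by
  refine hL.mem_iff.mpr fun z hz => ?_
  obtain ⟨a, ha⟩ := hL.exists_inner_eq_intCast hx hz
  exact ⟨-a, by rw [inner_neg_left, ha, Int.cast_neg]⟩

theorem sub_mem (hL : IsUnimodularLattice L) (hx : x ∈ L) (hy : y ∈ L) : x - y ∈ L :=
  sub_eq_add_neg x y ▸ hL.add_mem hx (hL.neg_mem hy)

theorem add_self_mem_evenSublattice (hL : IsUnimodularLattice L) (hx : x ∈ L) :
    x + x ∈ evenSublattice L := by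
  obtain ⟨a, ha⟩ := hL.exists_inner_eq_intCast hx hx
  refine ⟨hL.add_mem hx hx, 2 * a, ?_⟩
  rw [normOf_add, normOf, ha]
  push_cast
  ring

theorem exists_normOf_eq_two_mul_add_one (hL : IsUnimodularLattice L) (hx : x ∈ L)
    (hx_odd : x ∉ evenSublattice L) : ∃ c : ℤ, normOf x = 2 * c + 1 := by
  obtain ⟨a, ha⟩ := hL.exists_inner_eq_intCast hx hx
  obtain ⟨c, rfl | rfl⟩ := Int.even_or_odd' a
  · exact absurd ⟨hx, c, by rw [normOf, ha]; push_cast; ring⟩ hx_odd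
  · exact ⟨c, by rw [normOf, ha]; push_cast; ring⟩

theorem sub_mem_evenSublattice (hL : IsUnimodularLattice L) (hx : x ∈ L) (hy : y ∈ L)
    (hx_odd : x ∉ evenSublattice L) (hy_odd : y ∉ evenSublattice L) :
    x - y ∈ evenSublattice L := by
  obtain ⟨a, ha⟩ := hL.exists_normOf_eq_two_mul_add_one hx hx_odd
  obtain ⟨b, hb⟩ := hL.exists_normOf_eq_two_mul_add_one hy hy_odd
  obtain ⟨c, hc⟩ := hL.exists_inner_eq_intCast hx hy
  refine ⟨hL.sub_mem hx hy, a - c + b + 1, ?_⟩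
  rw [normOf_sub, ha, hb, hc]
  push_cast
  ring

/-- Twice a shadow vector is a characteristic vector. -/
theorem exists_inner_eq_of_mem_shadow (hL : IsUnimodularLattice L) (hs : s ∈ shadow L)
    (hx : x ∈ L) : ∃ m : ℤ, ⟪s, x⟫ = normOf x / 2 + m := by
  obtain ⟨hs_dual, hsL⟩ := hs
  by_cases hx_even : x ∈ evenSublattice L
  · obtain ⟨c, hc⟩ := hx_even.2
    obtain ⟨a, ha⟩ := hs_dual x hx_even
    exact ⟨a - c, by rw [ha, hc]; push_cast; ring⟩
  have inner_half : ∃ a : ℤ, ⟪s, x⟫ = 1 / 2 + (a : ℝ) := by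
    obtain ⟨y, hy, hsy⟩ : ∃ y ∈ L, ∀ m : ℤ, ⟪s, y⟫ ≠ (m : ℝ) := by
      have h := mt hL.mem_iff.mpr hsL
      push Not at h
      exact h
    have hy_odd : y ∉ evenSublattice L := fun h => (hs_dual y h).elim hsy
    obtain ⟨a, ha⟩ := hs_dual _ (hL.add_self_mem_evenSublattice hy)
    obtain ⟨b, hb⟩ := hs_dual _ (hL.sub_mem_evenSublattice hx hy hx_even hy_odd)
    rw [inner_add_right] at ha
    rw [inner_sub_right] at hb
    obtain ⟨c, rfl | rfl⟩ := Int.even_or_odd' a <;> push_cast at ha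
    · exact absurd (by linarith) (hsy c)
    · exact ⟨b + c, by push_cast; linarith⟩
  obtain ⟨a, ha⟩ := inner_half
  obtain ⟨c, hc⟩ := hL.exists_normOf_eq_two_mul_add_one hx hx_even
  exact ⟨a - c, by rw [ha, hc]; push_cast; ring⟩

theorem mem_shadow_of_subset_closure (hL : IsUnimodularLattice L) (hodd : IsOddLattice L)
    {S : Set (EuclideanSpace ℝ (Fin n))} (hSL : S ⊆ L) (hLS : L ⊆ AddSubgroup.closure S)
    (hs : ∀ x ∈ S, ∃ m : ℤ, ⟪s, x⟫ = normOf x / 2 + m) : s ∈ shadow L := by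
  have half_norm : ∀ x ∈ L, ∃ m : ℤ, ⟪s, x⟫ = normOf x / 2 + m := by
    intro x hx
    refine (AddSubgroup.closure_induction
      (p := fun x _ => x ∈ L ∧ ∃ m : ℤ, ⟪s, x⟫ = normOf x / 2 + m)
      (fun x hx => ⟨hSL hx, hs x hx⟩) ⟨hL.zero_mem, 0, by simp [normOf]⟩ ?_ ?_ (hLS hx)).2
    · rintro x y - - ⟨hx, a, ha⟩ ⟨hy, b, hb⟩
      obtain ⟨c, hc⟩ := hL.exists_inner_eq_intCast hx hy
      refine ⟨hL.add_mem hx hy, a + b - c, ?_⟩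
      rw [inner_add_right, normOf_add, ha, hb, hc]
      push_cast
      ring
    · rintro x - ⟨hx, a, ha⟩
      obtain ⟨c, hc⟩ := hL.exists_inner_eq_intCast hx hx
      refine ⟨hL.neg_mem hx, -a - c, ?_⟩
      rw [inner_neg_right, normOf, inner_neg_neg, ha, normOf, hc]
      push_cast
      ring
  refine ⟨fun x ⟨hx, c, hc⟩ => ?_, fun hsL => ?_⟩
  · obtain ⟨a, ha⟩ := half_norm x hx
    exact ⟨c + a, by rw [ha, hc]; push_cast; ring⟩
  · obtain ⟨x, hx, N, hN_odd, hN⟩ := hodd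
    obtain ⟨a, ha⟩ := half_norm x hx
    obtain ⟨b, hb⟩ := hL.exists_inner_eq_intCast hsL hx
    have hN_even : N = 2 * (b - a) := by
      rw [hb, hN] at ha
      exact_mod_cast show (N : ℝ) = 2 * (b - a) by linarith
    exact Int.not_odd_iff_even.mpr ⟨b - a, by lia⟩ hN_odd

theorem sub_mem_of_mem_shadow (hL : IsUnimodularLattice L) (hs : s ∈ shadow L)
    (ht : t ∈ shadow L) : s - t ∈ L := by
  refine hL.mem_iff.mpr fun x hx => ?_
  obtain ⟨a, ha⟩ := hL.exists_inner_eq_of_mem_shadow hs hx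
  obtain ⟨b, hb⟩ := hL.exists_inner_eq_of_mem_shadow ht hx
  exact ⟨a - b, by rw [inner_sub_left, ha, hb]; push_cast; ring⟩

theorem exists_normOf_eq_add_two_mul_of_mem_shadow (hL : IsUnimodularLattice L)
    (hs : s ∈ shadow L) (ht : t ∈ shadow L) : ∃ m : ℤ, normOf s = normOf t + 2 * m := by
  have hd := hL.sub_mem_of_mem_shadow hs ht
  obtain ⟨a, ha⟩ := hL.exists_inner_eq_of_mem_shadow ht hd
  obtain ⟨b, hb⟩ := hL.exists_inner_eq_intCast hd hd
  refine ⟨a + b, ?_⟩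
  rw [← add_sub_cancel t s, normOf_add, ha, normOf, normOf, hb]
  push_cast
  ring

/-- Norms of shadow vectors are congruent mod 2, so a lower bound weaker by less than 2 suffices. -/
theorem hasShadowMinNorm_of_mem_shadow (hL : IsUnimodularLattice L) (ht : t ∈ shadow L)
    (hlt : ∀ s ∈ shadow L, normOf t < normOf s + 2) : HasShadowMinNorm L (normOf t) := by
  refine ⟨⟨t, ht, rfl⟩, ?_⟩
  rintro _ ⟨s, hs, rfl⟩
  obtain ⟨m, hm⟩ := hL.exists_normOf_eq_add_two_mul_of_mem_shadow hs ht
  have hm_nonneg : 0 ≤ m := by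
    have : (-1 : ℝ) < m := by linarith [hlt s hs]
    have : -1 < m := by exact_mod_cast this
    lia
  have : (0 : ℝ) ≤ m := by exact_mod_cast hm_nonneg
  linarith

end IsUnimodularLattice

end UnimodularLattice

open scoped Matrix

section ReduceMod

variable {ι : Type*}

/-- Reduction modulo `m` of integer vectors. -/
def reduceMod (m : ℕ) : (ι → ℤ) →+ (ι → ZMod m) :=
  (Int.castAddHom (ZMod m)).compLeft ι

theorem reduceMod_surjective (m : ℕ) : Function.Surjective (reduceMod (ι := ι) m) :=
  ZMod.intCast_surjective.comp_left

theorem reduceMod_eq_zero_iff {m : ℕ} {x : ι → ℤ} :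
    reduceMod m x = 0 ↔ ∃ y : ι → ℤ, x = (m : ℤ) • y := by
  rw [funext_iff]
  simp only [funext_iff, Pi.smul_apply, smul_eq_mul]
  rw [← Classical.skolem (p := fun i y => x i = m * y)]
  exact forall_congr' fun i => ZMod.intCast_zmod_eq_zero_iff_dvd (x i) m

theorem reduceMod_eq_iff {m : ℕ} {x y : ι → ℤ} :
    reduceMod m x = reduceMod m y ↔ ∃ z : ι → ℤ, x = y + (m : ℤ) • z := by
  simp only [← sub_eq_zero (a := reduceMod m x), ← map_sub, reduceMod_eq_zero_iff,
    sub_eq_iff_eq_add']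

variable [Fintype ι]

theorem reduceMod_dotProduct (m : ℕ) (x y : ι → ℤ) :
    reduceMod m x ⬝ᵥ reduceMod m y = ((x ⬝ᵥ y : ℤ) : ZMod m) :=
  ((Int.castRingHom (ZMod m)).map_dotProduct x y).symm

theorem reduceMod_dotProduct_eq_zero_iff {m : ℕ} {x y : ι → ℤ} :
    reduceMod m x ⬝ᵥ reduceMod m y = 0 ↔ (m : ℤ) ∣ x ⬝ᵥ y := by
  rw [reduceMod_dotProduct, ZMod.intCast_zmod_eq_zero_iff_dvd]

theorem hammingNorm_reduceMod_le (m : ℕ) (x : ι → ℤ) :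
    (hammingNorm (reduceMod m x) : ℤ) ≤ x ⬝ᵥ x := by
  rw [hammingNorm, Finset.natCast_card_filter]
  refine Finset.sum_le_sum fun i _ => ?_
  split_ifs with hi
  · have : x i ≠ 0 := fun h => hi (by simp [reduceMod, h])
    exact Int.add_one_le_of_lt (mul_self_pos.mpr this)
  · exact mul_self_nonneg (x i)

theorem even_dotProduct_self_sub (x : ι → ℤ) : Even (x ⬝ᵥ x - 1 ⬝ᵥ x) := by
  rw [← sub_dotProduct]
  refine Finset.even_sum _ fun i _ => ?_
  rw [Pi.sub_apply, Pi.one_apply, mul_comm]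
  exact Int.even_mul_pred_self (x i)

theorem reduceMod_sub_one_dotProduct_eq_zero_iff {w t : ι → ℤ} :
    (reduceMod 2 w - 1) ⬝ᵥ reduceMod 2 t = 0 ↔
      (8 : ℤ) ∣ 2 * w ⬝ᵥ ((2 : ℤ) • t) - ((2 : ℤ) • t) ⬝ᵥ ((2 : ℤ) • t) := by
  have hone : (1 : ι → ZMod 2) = reduceMod 2 1 := by ext; simp [reduceMod]
  obtain ⟨c, hc⟩ := even_dotProduct_self_sub t
  rw [hone, ← map_sub, reduceMod_dotProduct_eq_zero_iff, sub_dotProduct]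
  simp only [smul_dotProduct, dotProduct_smul, smul_eq_mul]
  lia

end ReduceMod

theorem hammingNorm_add_hammingNorm_sub_one {ι : Type*} [Fintype ι] (v : ι → ZMod 2) :
    hammingNorm v + hammingNorm (v - 1) = Fintype.card ι := by
  have sub_one_ne_zero_iff : ∀ c : ZMod 2, c - 1 ≠ 0 ↔ ¬ c ≠ 0 := by decide
  simp only [hammingNorm, Pi.sub_apply, Pi.one_apply, sub_one_ne_zero_iff]
  exact Finset.card_filter_add_card_filter_not _

theorem three_le_hammingNorm_of_mulVec_eq_zero {ι κ : Type*} [Fintype ι]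
    {H : Matrix κ ι (ZMod 2)} (hcol : ∀ j, H.col j ≠ 0) (hinj : Function.Injective H.col)
    {x : ι → ZMod 2} (hx : H *ᵥ x = 0) (hx0 : x ≠ 0) : 3 ≤ hammingNorm x := by
  have sum_col : ∑ j with x j ≠ 0, H.col j = 0 := by
    rw [← hx, Matrix.mulVec_eq_sum, Finset.sum_filter]
    refine Finset.sum_congr rfl fun j _ => ?_
    split_ifs with hj
    · have hj_one : x j = 1 := Fin.eq_one_of_ne_zero (x j) hj
      rw [hj_one, MulOpposite.op_one, one_smul]
      rfl
    · rw [not_not.mp hj, MulOpposite.op_zero, zero_smul]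
  have card_ne_one : hammingNorm x ≠ 1 := fun h => by
    obtain ⟨i, hi⟩ := Finset.card_eq_one.mp h
    rw [hi, Finset.sum_singleton] at sum_col
    exact hcol i sum_col
  have card_ne_two : hammingNorm x ≠ 2 := fun h => by
    classical
    obtain ⟨i, j, hij, hS⟩ := Finset.card_eq_two.mp h
    rw [hS, Finset.sum_pair hij] at sum_col
    exact hij (hinj (funext fun k => CharTwo.add_eq_zero.mp (congrFun sum_col k)))
  have := hammingNorm_pos_iff.mpr hx0
  lia

section Codes

variable {ι : Type*}

section Dual

variable [Fintype ι] [DecidableEq ι]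

/-- The dual of a code `C ⊆ Rⁿ` with respect to the dot product. -/
def dualCode {R : Type*} [CommRing R] (C : Submodule R (ι → R)) : Submodule R (ι → R) :=
  LinearMap.BilinForm.orthogonal (dotProductEquiv R ι).toLinearMap C

theorem mem_dualCode {R : Type*} [CommRing R] {C : Submodule R (ι → R)} {x : ι → R} :
    x ∈ dualCode C ↔ ∀ y ∈ C, y ⬝ᵥ x = 0 :=
  Iff.rfl

theorem dualCode_dualCode {K : Type*} [Field K] (C : Submodule K (ι → K)) :
    dualCode (dualCode C) = C := by
  have hrefl : LinearMap.BilinForm.IsRefl (dotProductEquiv K ι).toLinearMap :=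
    fun x y h => (dotProduct_comm y x).trans h
  have hnondeg : LinearMap.BilinForm.Nondegenerate (dotProductEquiv K ι).toLinearMap :=
    hrefl.nondegenerate_iff_separatingLeft.mpr fun x h => dotProduct_eq_zero x h
  exact LinearMap.BilinForm.orthogonal_orthogonal hnondeg hrefl C

end Dual

/-- The residue code of a `ℤ₄`-code, consisting of its codewords reduced modulo 2. -/
def residueCode (C : Submodule (ZMod 4) (ι → ZMod 4)) : Submodule (ZMod 2) (ι → ZMod 2) :=
  AddSubgroup.toZModSubmodule 2 ((C.toAddSubgroup.comap (reduceMod 4)).map (reduceMod 2))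

theorem reduceMod_mem_residueCode {C : Submodule (ZMod 4) (ι → ZMod 4)} {x : ι → ℤ}
    (hx : reduceMod 4 x ∈ C) : reduceMod 2 x ∈ residueCode C :=
  ⟨x, hx, rfl⟩

theorem reduceMod_two_zsmul_mem_iff [Fintype ι] [DecidableEq ι]
    {C : Submodule (ZMod 4) (ι → ZMod 4)} (hC : dualCode C = C) {t : ι → ℤ} :
    reduceMod 4 ((2 : ℤ) • t) ∈ C ↔ reduceMod 2 t ∈ dualCode (residueCode C) := by
  nth_rw 1 [← hC]
  simp only [mem_dualCode, (reduceMod_surjective 4).forall]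
  have mem_residueCode_iff {v : ι → ZMod 2} :
      v ∈ residueCode C ↔ ∃ x, reduceMod 4 x ∈ C ∧ reduceMod 2 x = v := Iff.rfl
  simp only [mem_residueCode_iff, forall_exists_index, and_imp, forall_apply_eq_imp_iff₂,
    reduceMod_dotProduct_eq_zero_iff, dotProduct_smul, smul_eq_mul]
  exact forall₂_congr fun x _ => by push_cast; lia

end Codes

section RowCode

variable {ι κ : Type*}

/-- The code over `ℤ/m` generated by the rows of an integer matrix. -/
def rowCode (m : ℕ) (G : Matrix κ ι ℤ) : Submodule (ZMod m) (ι → ZMod m) :=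
  Submodule.span (ZMod m) (Set.range fun k => reduceMod m (G k))

theorem reduceMod_row_mem_rowCode (m : ℕ) (G : Matrix κ ι ℤ) (k : κ) :
    reduceMod m (G k) ∈ rowCode m G :=
  Submodule.subset_span ⟨k, rfl⟩

theorem mem_rowCode_iff_exists_vecMul [Fintype κ] {m : ℕ} {G : Matrix κ ι ℤ} {x : ι → ZMod m} :
    x ∈ rowCode m G ↔ ∃ c : κ → ZMod m, c ᵥ* G.map (Int.cast : ℤ → ZMod m) = x := by
  simp only [rowCode, Submodule.mem_span_range_iff_exists_fun, Matrix.vecMul_eq_sum]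
  rfl

theorem mem_rowCode_iff [Fintype κ] {m : ℕ} {G : Matrix κ ι ℤ} {x : ι → ZMod m} :
    x ∈ rowCode m G ↔ ∃ a : κ → ℤ, reduceMod m (a ᵥ* G) = x := by
  have reduceMod_vecMul (a : κ → ℤ) :
      reduceMod m a ᵥ* G.map (Int.cast : ℤ → ZMod m) = reduceMod m (a ᵥ* G) :=
    funext fun i => ((Int.castRingHom (ZMod m)).map_vecMul G a i).symm
  simp only [mem_rowCode_iff_exists_vecMul, (reduceMod_surjective m).exists, reduceMod_vecMul]

variable [Fintype ι] [DecidableEq ι]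

theorem reduceMod_mem_dualCode_rowCode_iff {m : ℕ} {G : Matrix κ ι ℤ} {x : ι → ℤ} :
    reduceMod m x ∈ dualCode (rowCode m G) ↔ reduceMod m (G *ᵥ x) = 0 := by
  have apply_eq (k : κ) : reduceMod m (G *ᵥ x) k = reduceMod m (G k) ⬝ᵥ reduceMod m x :=
    (reduceMod_dotProduct m (G k) x).symm
  simp only [funext_iff, apply_eq, Pi.zero_apply]
  refine ⟨fun h k => h _ (reduceMod_row_mem_rowCode m G k), fun h y hy => ?_⟩
  have hle : rowCode m G ≤ LinearMap.ker (dotProductEquiv (ZMod m) ι (reduceMod m x)) := by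
    rw [rowCode, Submodule.span_le]
    rintro _ ⟨k, rfl⟩
    exact (dotProduct_comm _ _).trans (h k)
  exact (dotProduct_comm _ _).trans (hle hy)

theorem rowCode_le_dualCode_iff {m : ℕ} {G : Matrix κ ι ℤ} :
    rowCode m G ≤ dualCode (rowCode m G) ↔ ∀ k, reduceMod m (G *ᵥ G k) = 0 := by
  nth_rw 1 [rowCode]
  simp only [Submodule.span_le, Set.range_subset_iff, SetLike.mem_coe,
    reduceMod_mem_dualCode_rowCode_iff]

theorem three_le_hammingNorm_of_mem_dualCode_rowCode {G : Matrix κ ι ℤ}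
    (hcol : ∀ j, reduceMod 2 (G.col j) ≠ 0)
    (hinj : Function.Injective fun j => reduceMod 2 (G.col j)) {x : ι → ZMod 2}
    (hx : x ∈ dualCode (rowCode 2 G)) (hx0 : x ≠ 0) : 3 ≤ hammingNorm x :=
  three_le_hammingNorm_of_mulVec_eq_zero (H := G.map (Int.cast : ℤ → ZMod 2)) hcol hinj
    (funext fun k => hx _ (reduceMod_row_mem_rowCode 2 G k)) hx0

/-- The `ℤ₄`-code generated by the rows of `G` and by all `2t` with `t` orthogonal to the rows of
`G` modulo 2. It is self-dual if the rows of `G` are orthogonal modulo 4. -/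
def quaternaryLift (G : Matrix κ ι ℤ) : Submodule (ZMod 4) (ι → ZMod 4) :=
  rowCode 4 G ⊔ AddSubgroup.toZModSubmodule 4
    (((dualCode (rowCode 2 G)).toAddSubgroup.comap (reduceMod 2)).map ((2 : ℤ) • reduceMod 4))

theorem reduceMod_mem_quaternaryLift_iff [Fintype κ] {G : Matrix κ ι ℤ} {x : ι → ℤ} :
    reduceMod 4 x ∈ quaternaryLift G ↔ ∃ (a : κ → ℤ) (t : ι → ℤ),
      reduceMod 2 t ∈ dualCode (rowCode 2 G) ∧ x = a ᵥ* G + (2 : ℤ) • t := by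
  rw [quaternaryLift, Submodule.mem_sup]
  constructor
  · rintro ⟨_, hy, _, ⟨t, ht, rfl⟩, hxy⟩
    obtain ⟨a, rfl⟩ := mem_rowCode_iff.mp hy
    rw [AddMonoidHom.smul_apply, ← map_zsmul, ← map_add, eq_comm, reduceMod_eq_iff] at hxy
    obtain ⟨u, rfl⟩ := hxy
    refine ⟨a, t + (2 : ℤ) • u, ?_, ?_⟩
    · rwa [reduceMod_eq_iff.mpr ⟨u, by rw [Nat.cast_ofNat]⟩]
    · push_cast
      module
  · rintro ⟨a, t, ht, rfl⟩
    exact ⟨_, mem_rowCode_iff.mpr ⟨a, rfl⟩, _, ⟨t, ht, rfl⟩,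
      by rw [map_add, map_zsmul, AddMonoidHom.smul_apply]⟩

theorem residueCode_quaternaryLift [Finite κ] (G : Matrix κ ι ℤ) :
    residueCode (quaternaryLift G) = rowCode 2 G := by
  cases nonempty_fintype κ
  refine le_antisymm ?_ fun x hx => ?_
  · rintro _ ⟨x, hx, rfl⟩
    obtain ⟨a, t, -, rfl⟩ := reduceMod_mem_quaternaryLift_iff.mp hx
    exact mem_rowCode_iff.mpr ⟨a, (reduceMod_eq_iff.mpr ⟨t, rfl⟩).symm⟩
  · obtain ⟨a, rfl⟩ := mem_rowCode_iff.mp hx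
    exact reduceMod_mem_residueCode (Submodule.mem_sup_left (mem_rowCode_iff.mpr ⟨a, rfl⟩))

theorem reduceMod_mem_quaternaryLift_iff_of_rowCode_le_dualCode [Finite κ] {G : Matrix κ ι ℤ}
    (hG : rowCode 4 G ≤ dualCode (rowCode 4 G)) {x : ι → ℤ} :
    reduceMod 4 x ∈ quaternaryLift G ↔
      reduceMod 4 (G *ᵥ x) = 0 ∧ reduceMod 2 x ∈ rowCode 2 G := by
  cases nonempty_fintype κ
  have mulVec_mod_four (a : κ → ℤ) (t : ι → ℤ) :
      reduceMod 4 (G *ᵥ (a ᵥ* G + (2 : ℤ) • t)) = 0 ↔ reduceMod 2 (G *ᵥ t) = 0 := by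
    have h := reduceMod_mem_dualCode_rowCode_iff.mp (hG (mem_rowCode_iff.mpr ⟨a, rfl⟩))
    rw [Matrix.mulVec_add, Matrix.mulVec_smul, map_add, h, zero_add]
    simp only [reduceMod_eq_zero_iff]
    refine exists_congr fun u => ?_
    simp only [funext_iff, Pi.smul_apply, smul_eq_mul]
    exact forall_congr' fun k => by push_cast; lia
  constructor
  · intro hx
    refine ⟨?_, residueCode_quaternaryLift G ▸ reduceMod_mem_residueCode hx⟩
    obtain ⟨a, t, ht, rfl⟩ := reduceMod_mem_quaternaryLift_iff.mp hx
    exact (mulVec_mod_four a t).mpr (reduceMod_mem_dualCode_rowCode_iff.mp ht)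
  · rintro ⟨hGx, hx⟩
    obtain ⟨a, ha⟩ := mem_rowCode_iff.mp hx
    obtain ⟨t, rfl⟩ := reduceMod_eq_iff.mp ha.symm
    exact reduceMod_mem_quaternaryLift_iff.mpr
      ⟨a, t, reduceMod_mem_dualCode_rowCode_iff.mpr ((mulVec_mod_four a t).mp hGx), rfl⟩

theorem dualCode_quaternaryLift [Finite κ] {G : Matrix κ ι ℤ}
    (hG : rowCode 4 G ≤ dualCode (rowCode 4 G)) :
    dualCode (quaternaryLift G) = quaternaryLift G := by
  cases nonempty_fintype κ
  have mem_iff {x : ι → ℤ} := reduceMod_mem_quaternaryLift_iff_of_rowCode_le_dualCode hG (x := x)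
  refine le_antisymm (fun x hx => ?_) (fun x hx y hy => ?_)
  · obtain ⟨x, rfl⟩ := reduceMod_surjective 4 x
    rw [mem_iff]
    refine ⟨reduceMod_mem_dualCode_rowCode_iff.mp fun y hy => hx y (Submodule.mem_sup_left hy), ?_⟩
    rw [← dualCode_dualCode (rowCode 2 G), mem_dualCode, (reduceMod_surjective 2).forall]
    intro t ht
    have h := hx _ (reduceMod_mem_quaternaryLift_iff.mpr
      ⟨0, t, ht, by rw [Matrix.zero_vecMul, zero_add]⟩)
    change reduceMod 4 ((2 : ℤ) • t) ⬝ᵥ reduceMod 4 x = 0 at h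
    rw [reduceMod_dotProduct_eq_zero_iff, smul_dotProduct, smul_eq_mul] at h
    exact reduceMod_dotProduct_eq_zero_iff.mpr (by lia)
  · obtain ⟨x, rfl⟩ := reduceMod_surjective 4 x
    obtain ⟨y, rfl⟩ := reduceMod_surjective 4 y
    obtain ⟨hGx, hx⟩ := mem_iff.mp hx
    obtain ⟨a, t, ht, rfl⟩ := reduceMod_mem_quaternaryLift_iff.mp hy
    have ha : (4 : ℤ) ∣ a ⬝ᵥ G *ᵥ x :=
      reduceMod_dotProduct_eq_zero_iff.mp (by rw [hGx, dotProduct_zero])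
    have ht : (2 : ℤ) ∣ x ⬝ᵥ t := reduceMod_dotProduct_eq_zero_iff.mp (ht _ hx)
    suffices (4 : ℤ) ∣ (a ᵥ* G + (2 : ℤ) • t) ⬝ᵥ x from reduceMod_dotProduct_eq_zero_iff.mpr this
    rw [add_dotProduct, ← Matrix.dotProduct_mulVec, smul_dotProduct, smul_eq_mul,
      dotProduct_comm t]
    lia

end RowCode

section ConstructionA

variable {n : ℕ}

/-- The vector `x / √k` of `ℝⁿ`, for an integer vector `x`. -/
def scaledVec (k : ℕ) : (Fin n → ℤ) →+ EuclideanSpace ℝ (Fin n) where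
  toFun x := (√k)⁻¹ • WithLp.toLp 2 fun i => (x i : ℝ)
  map_zero' := by ext; simp
  map_add' x y := by ext; simp [mul_add]

theorem scaledVec_apply (k : ℕ) (x : Fin n → ℤ) (i : Fin n) :
    scaledVec k x i = (√k)⁻¹ * x i :=
  rfl

theorem scaledVec_natCast_zsmul_single (k : ℕ) (i : Fin n) :
    scaledVec k ((k : ℤ) • Pi.single i 1) = EuclideanSpace.single i √k := by
  ext j
  obtain rfl | hj := eq_or_ne j i
  · rw [scaledVec_apply, PiLp.single_apply, if_pos rfl, Pi.smul_apply, Pi.single_eq_same]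
    rw [smul_eq_mul, mul_one, Int.cast_natCast, inv_mul_eq_div, Real.div_sqrt]
  · rw [scaledVec_apply, PiLp.single_apply, if_neg hj, Pi.smul_apply, Pi.single_eq_of_ne hj,
      smul_zero, Int.cast_zero, mul_zero]

theorem inner_scaledVec (k : ℕ) (x y : Fin n → ℤ) :
    ⟪scaledVec k x, scaledVec k y⟫ = ((x ⬝ᵥ y : ℤ) : ℝ) / k := by
  have hk : (√k)⁻¹ * (√k)⁻¹ = (k : ℝ)⁻¹ := by rw [← mul_inv, Real.mul_self_sqrt k.cast_nonneg]
  rw [PiLp.inner_apply, dotProduct, Int.cast_sum, Finset.sum_div]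
  refine Finset.sum_congr rfl fun i _ => ?_
  rw [scaledVec_apply, scaledVec_apply, Int.cast_mul, div_eq_mul_inv, ← hk]
  simp only [RCLike.inner_apply, conj_trivial]
  ring

theorem normOf_scaledVec (k : ℕ) (x : Fin n → ℤ) :
    normOf (scaledVec k x) = ((x ⬝ᵥ x : ℤ) : ℝ) / k :=
  inner_scaledVec k x x

/-- Construction A: the lattice of all `x / √k` with `x` an integer vector whose reduction modulo
`k` belongs to the code `C`. -/
def constructionA {k : ℕ} (C : Submodule (ZMod k) (Fin n → ZMod k)) :
    Set (EuclideanSpace ℝ (Fin n)) :=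
  scaledVec k '' {x | reduceMod k x ∈ C}

theorem scaledVec_mem_constructionA {k : ℕ} {C : Submodule (ZMod k) (Fin n → ZMod k)}
    {x : Fin n → ℤ} (hx : reduceMod k x ∈ C) : scaledVec k x ∈ constructionA C :=
  ⟨x, hx, rfl⟩

theorem scaledVec_natCast_zsmul_mem_constructionA {k : ℕ} (C : Submodule (ZMod k) (Fin n → ZMod k))
    (x : Fin n → ℤ) : scaledVec k ((k : ℤ) • x) ∈ constructionA C := by
  refine scaledVec_mem_constructionA ?_
  rw [reduceMod_eq_zero_iff.mpr ⟨x, rfl⟩]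
  exact C.zero_mem

section NeZero

variable {k : ℕ} [NeZero k]

theorem exists_inner_scaledVec_eq_intCast_iff {x y : Fin n → ℤ} :
    (∃ m : ℤ, ⟪scaledVec k x, scaledVec k y⟫ = (m : ℝ)) ↔ (k : ℤ) ∣ x ⬝ᵥ y := by
  have hk : (k : ℝ) ≠ 0 := NeZero.ne _
  refine exists_congr fun m => ?_
  rw [inner_scaledVec, div_eq_iff hk, mul_comm]
  norm_cast

theorem exists_inner_scaledVec_eq_half_normOf_add_iff {x y : Fin n → ℤ} :
    (∃ m : ℤ, ⟪scaledVec k x, scaledVec k y⟫ = normOf (scaledVec k y) / 2 + m) ↔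
      (2 * k : ℤ) ∣ 2 * x ⬝ᵥ y - y ⬝ᵥ y := by
  have hk : (k : ℝ) ≠ 0 := NeZero.ne _
  refine exists_congr fun m => ?_
  rw [inner_scaledVec, normOf_scaledVec, ← Int.cast_inj (α := ℝ)]
  push_cast
  field_simp
  constructor <;> intro h <;> linarith

theorem exists_scaledVec_eq {z : EuclideanSpace ℝ (Fin n)}
    (hz : ∀ x : Fin n → ℤ, ∃ m : ℤ, ⟪z, scaledVec k ((k : ℤ) • x)⟫ = (m : ℝ)) :
    ∃ x, scaledVec k x = z := by
  have hk : √(k : ℝ) ≠ 0 := (Real.sqrt_pos.mpr (Nat.cast_pos.mpr (NeZero.pos k))).ne'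
  have sqrt_mul_apply (i : Fin n) : ⟪z, scaledVec k ((k : ℤ) • Pi.single i 1)⟫ = √k * z i := by
    rw [scaledVec_natCast_zsmul_single, EuclideanSpace.inner_single_right, conj_trivial]
  choose x hx using fun i => hz (Pi.single i 1)
  refine ⟨x, PiLp.ext fun i => ?_⟩
  rw [scaledVec_apply, ← hx, sqrt_mul_apply, inv_mul_cancel_left₀ hk]

theorem isUnimodularLattice_constructionA {C : Submodule (ZMod k) (Fin n → ZMod k)}
    (hC : dualCode C = C) : IsUnimodularLattice (constructionA C) := by
  refine Set.Subset.antisymm ?_ fun z hz => ?_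
  · rintro _ ⟨x, hx, rfl⟩ _ ⟨y, hy, rfl⟩
    have hxy := mem_dualCode.mp (hC.ge hy) _ hx
    exact exists_inner_scaledVec_eq_intCast_iff.mpr (reduceMod_dotProduct_eq_zero_iff.mp hxy)
  · obtain ⟨x, rfl⟩ := exists_scaledVec_eq fun x =>
      hz _ (scaledVec_natCast_zsmul_mem_constructionA C x)
    refine scaledVec_mem_constructionA (hC.le (mem_dualCode.mpr ?_))
    rw [(reduceMod_surjective k).forall]
    intro y hy
    rw [dotProduct_comm, reduceMod_dotProduct_eq_zero_iff]
    exact exists_inner_scaledVec_eq_intCast_iff.mp (hz _ (scaledVec_mem_constructionA hy))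

end NeZero

section Quaternary

variable {C : Submodule (ZMod 4) (Fin n → ZMod 4)}

theorem four_mul_le_dotProduct_self (hC : dualCode C = C) {d : ℕ} (hd : d ≤ 4)
    (hres : ∀ b ∈ residueCode C, b ≠ 0 → 4 * d ≤ hammingNorm b)
    (hdual : ∀ b ∈ dualCode (residueCode C), b ≠ 0 → d ≤ hammingNorm b)
    {x : Fin n → ℤ} (hx : reduceMod 4 x ∈ C) (hx0 : x ≠ 0) : (4 * d : ℤ) ≤ x ⬝ᵥ x := by
  by_cases hx2 : reduceMod 2 x = 0
  · obtain ⟨t, rfl⟩ := reduceMod_eq_zero_iff.mp hx2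
    suffices (d : ℤ) ≤ t ⬝ᵥ t by
      rw [smul_dotProduct, dotProduct_smul, smul_eq_mul, smul_eq_mul]
      push_cast
      lia
    by_cases ht2 : reduceMod 2 t = 0
    · obtain ⟨u, rfl⟩ := reduceMod_eq_zero_iff.mp ht2
      have hu : u ⬝ᵥ u ≠ 0 := fun h => hx0 (by rw [dotProduct_self_eq_zero.mp h]; simp)
      have hu_nonneg : 0 ≤ u ⬝ᵥ u := Finset.sum_nonneg fun i _ => mul_self_nonneg (u i)
      rw [smul_dotProduct, dotProduct_smul, smul_eq_mul, smul_eq_mul]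
      push_cast
      lia
    · have := hdual _ ((reduceMod_two_zsmul_mem_iff hC).mp hx) ht2
      have := hammingNorm_reduceMod_le 2 t
      lia
  · have := hres _ (reduceMod_mem_residueCode hx) hx2
    have := hammingNorm_reduceMod_le 2 x
    lia

theorem le_normOf_of_mem_constructionA (hC : dualCode C = C) {d : ℕ} (hd : d ≤ 4)
    (hres : ∀ b ∈ residueCode C, b ≠ 0 → 4 * d ≤ hammingNorm b)
    (hdual : ∀ b ∈ dualCode (residueCode C), b ≠ 0 → d ≤ hammingNorm b)
    {y : EuclideanSpace ℝ (Fin n)} (hy : y ∈ constructionA C) (hy0 : y ≠ 0) :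
    d ≤ normOf y := by
  obtain ⟨x, hx, rfl⟩ := hy
  have hx0 : x ≠ 0 := fun h => hy0 (by rw [h, map_zero])
  rw [normOf_scaledVec, Nat.cast_ofNat, le_div_iff₀ four_pos, mul_comm]
  exact_mod_cast four_mul_le_dotProduct_self hC hd hres hdual hx hx0

theorem exists_scaledVec_eq_of_mem_shadow (hC : dualCode C = C) {s : EuclideanSpace ℝ (Fin n)}
    (hs : s ∈ shadow (constructionA C)) :
    ∃ w, scaledVec 4 w = s ∧ reduceMod 2 w - 1 ∈ residueCode C := by
  have half_norm {x} (hx : x ∈ constructionA C) :=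
    (isUnimodularLattice_constructionA hC).exists_inner_eq_of_mem_shadow hs hx
  obtain ⟨w, rfl⟩ : ∃ w, scaledVec 4 w = s := by
    refine exists_scaledVec_eq fun x => ?_
    obtain ⟨m, hm⟩ := half_norm (scaledVec_natCast_zsmul_mem_constructionA C x)
    refine ⟨2 * x ⬝ᵥ x + m, ?_⟩
    rw [hm, normOf_scaledVec, smul_dotProduct, dotProduct_smul, smul_eq_mul, smul_eq_mul]
    push_cast
    ring
  refine ⟨w, rfl, ?_⟩
  rw [← dualCode_dualCode (residueCode C), mem_dualCode, (reduceMod_surjective 2).forall]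
  intro t ht
  rw [dotProduct_comm, reduceMod_sub_one_dotProduct_eq_zero_iff]
  exact exists_inner_scaledVec_eq_half_normOf_add_iff.mp
    (half_norm (scaledVec_mem_constructionA ((reduceMod_two_zsmul_mem_iff hC).mpr ht)))

theorem le_normOf_of_mem_shadow_constructionA (hC : dualCode C = C) {d : ℕ}
    (hres : ∀ b ∈ residueCode C, d + hammingNorm b ≤ n) {s : EuclideanSpace ℝ (Fin n)}
    (hs : s ∈ shadow (constructionA C)) : (d / 4 : ℝ) ≤ normOf s := by
  obtain ⟨w, rfl, hw⟩ := exists_scaledVec_eq_of_mem_shadow hC hs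
  have h_card := hammingNorm_add_hammingNorm_sub_one (reduceMod 2 w)
  have h_wt := hammingNorm_reduceMod_le 2 w
  have h_res := hres _ hw
  rw [Fintype.card_fin] at h_card
  have h_dot : (d : ℤ) ≤ w ⬝ᵥ w := by lia
  rw [normOf_scaledVec, Nat.cast_ofNat]
  gcongr
  exact_mod_cast h_dot

theorem scaledVec_mem_shadow_constructionA_quaternaryLift {κ : Type*} [Finite κ]
    {G : Matrix κ (Fin n) ℤ} (hG : rowCode 4 G ≤ dualCode (rowCode 4 G))
    (hodd : IsOddLattice (constructionA (quaternaryLift G))) {w : Fin n → ℤ}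
    (hrow : ∀ k, (8 : ℤ) ∣ 2 * w ⬝ᵥ G k - G k ⬝ᵥ G k)
    (hres : reduceMod 2 w - 1 ∈ rowCode 2 G) :
    scaledVec 4 w ∈ shadow (constructionA (quaternaryLift G)) := by
  cases nonempty_fintype κ
  have hC := dualCode_quaternaryLift hG
  let T : Set (Fin n → ℤ) := {t | reduceMod 2 t ∈ dualCode (rowCode 2 G)}
  let S := scaledVec 4 '' (Set.range G ∪ ((2 : ℤ) • ·) '' T)
  refine (isUnimodularLattice_constructionA hC).mem_shadow_of_subset_closure hodd (S := S)
    ?_ ?_ ?_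
  · refine Set.image_mono (Set.union_subset ?_ ?_)
    · rintro _ ⟨k, rfl⟩
      exact Submodule.mem_sup_left (reduceMod_row_mem_rowCode 4 G k)
    · rintro _ ⟨t, ht, rfl⟩
      refine (reduceMod_two_zsmul_mem_iff hC).mpr ?_
      rwa [residueCode_quaternaryLift]
  · rintro _ ⟨x, hx, rfl⟩
    obtain ⟨a, t, ht, rfl⟩ := reduceMod_mem_quaternaryLift_iff.mp hx
    rw [map_add, Matrix.vecMul_eq_sum, map_sum]
    refine add_mem (sum_mem fun k _ => ?_) (AddSubgroup.subset_closure ⟨_, .inr ⟨t, ht, rfl⟩, rfl⟩)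
    rw [map_zsmul]
    exact zsmul_mem (AddSubgroup.subset_closure (Set.mem_image_of_mem _ (.inl ⟨k, rfl⟩))) _
  · rintro _ ⟨_, ⟨k, rfl⟩ | ⟨t, ht, rfl⟩, rfl⟩
    · exact exists_inner_scaledVec_eq_half_normOf_add_iff.mpr (hrow k)
    · exact exists_inner_scaledVec_eq_half_normOf_add_iff.mpr
        (reduceMod_sub_one_dotProduct_eq_zero_iff.mp (ht _ hres))

end Quaternary

end ConstructionA

section Dim37

/-- Modulo 2, a generator matrix of a `[37, 6]` code with weights between 12 and 20 and dual
distance 3. The entries 2 are chosen such that the rows are orthogonal modulo 4. -/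
def generatorMatrix : Matrix (Fin 6) (Fin 37) ℤ :=
  ![![1, 0, 0, 0, 0, 0, 1, 1, 0, 1, 0, 1, 0, 1, 1, 0, 0, 1, 0, 1,
      0, 1, 1, 1, 0, 0, 0, 1, 0, 0, 1, 1, 0, 0, 1, 0, 0],
    ![0, 1, 0, 0, 0, 0, 1, 0, 1, 1, 1, 1, 0, 0, 1, 1, 1, 1, 0, 0,
      1, 1, 0, 0, 1, 1, 0, 0, 1, 0, 0, 1, 1, 1, 1, 0, 1],
    ![0, 2, 1, 0, 0, 0, 0, 1, 1, 1, 0, 0, 1, 1, 1, 1, 0, 0, 1, 1,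
      1, 1, 0, 1, 1, 0, 1, 1, 1, 0, 0, 0, 1, 0, 0, 1, 1],
    ![0, 0, 0, 1, 0, 0, 0, 0, 0, 0, 1, 1, 1, 1, 1, 0, 1, 1, 1, 1,
      1, 1, 0, 0, 0, 1, 1, 1, 1, 0, 0, 0, 0, 1, 1, 1, 1],
    ![2, 2, 0, 2, 1, 0, 0, 0, 0, 0, 0, 0, 0, 0, 0, 1, 1, 1, 1, 1,
      1, 1, 0, 0, 0, 0, 0, 0, 0, 1, 1, 1, 1, 1, 1, 1, 1],
    ![2, 0, 0, 0, 0, 1, 0, 0, 0, 0, 0, 0, 0, 0, 0, 0, 0, 0, 0, 0,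
      0, 0, 1, 1, 1, 1, 1, 1, 1, 1, 1, 1, 1, 1, 1, 1, 1]]

/-- Twice a shadow vector of norm `21 / 4`; it is congruent to the complement of the first row of
`generatorMatrix` modulo 2. -/
def shadowVec : Fin 37 → ℤ :=
  ![0, 1, 1, -1, 1, -1, 0, 0, 1, 0, 1, 0, 1, 0, 0, 1, 1, 0, 1, 0,
    1, 0, 0, 0, -1, 1, 1, 0, 1, 1, 0, 0, 1, 1, 0, 1, 1]

/-- The unimodular lattice obtained by Construction A from the quaternary lift of
`generatorMatrix`. -/
def lattice37 : Set (EuclideanSpace ℝ (Fin 37)) :=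
  constructionA (quaternaryLift generatorMatrix)

theorem rowCode_generatorMatrix_le_dualCode :
    rowCode 4 generatorMatrix ≤ dualCode (rowCode 4 generatorMatrix) :=
  rowCode_le_dualCode_iff.mpr (by decide +kernel)

theorem hammingNorm_mem_Icc_of_mem_rowCode_generatorMatrix {b : Fin 37 → ZMod 2}
    (hb : b ∈ rowCode 2 generatorMatrix) (hb0 : b ≠ 0) : hammingNorm b ∈ Set.Icc 12 20 := by
  have weights : ∀ c : Fin 6 → ZMod 2, c ᵥ* generatorMatrix.map Int.cast ≠ 0 →
      12 ≤ hammingNorm (c ᵥ* generatorMatrix.map (Int.cast : ℤ → ZMod 2)) ∧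
      hammingNorm (c ᵥ* generatorMatrix.map (Int.cast : ℤ → ZMod 2)) ≤ 20 := by
    decide +kernel
  obtain ⟨c, rfl⟩ := mem_rowCode_iff_exists_vecMul.mp hb
  exact weights c hb0

theorem three_le_hammingNorm_of_mem_dualCode_generatorMatrix {b : Fin 37 → ZMod 2}
    (hb : b ∈ dualCode (rowCode 2 generatorMatrix)) (hb0 : b ≠ 0) : 3 ≤ hammingNorm b :=
  three_le_hammingNorm_of_mem_dualCode_rowCode (by decide +kernel) (by decide +kernel) hb hb0

theorem isUnimodularLattice_lattice37 : IsUnimodularLattice lattice37 :=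
  isUnimodularLattice_constructionA (dualCode_quaternaryLift rowCode_generatorMatrix_le_dualCode)

theorem three_le_normOf_of_mem_lattice37 {y : EuclideanSpace ℝ (Fin 37)} (hy : y ∈ lattice37)
    (hy0 : y ≠ 0) : 3 ≤ normOf y := by
  refine le_normOf_of_mem_constructionA (d := 3)
    (dualCode_quaternaryLift rowCode_generatorMatrix_le_dualCode) (by norm_num) ?_ ?_ hy hy0
  all_goals rw [residueCode_quaternaryLift]; intro b hb hb0
  · exact (hammingNorm_mem_Icc_of_mem_rowCode_generatorMatrix hb hb0).1
  · exact three_le_hammingNorm_of_mem_dualCode_generatorMatrix hb hb0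

theorem exists_mem_lattice37_normOf_eq_three : ∃ y ∈ lattice37, normOf y = 3 := by
  -- Columns 0, 1 and 6 of the generator matrix add up to zero modulo 2.
  let t : Fin 37 → ℤ := Pi.single 0 1 + Pi.single 1 1 + Pi.single 6 1
  have ht : reduceMod 2 (generatorMatrix *ᵥ t) = 0 := by decide +kernel
  have h_norm : ((2 : ℤ) • t) ⬝ᵥ ((2 : ℤ) • t) = 12 := by decide +kernel
  refine ⟨_, ⟨(2 : ℤ) • t, ?_, rfl⟩, by rw [normOf_scaledVec, h_norm]; norm_num⟩
  refine reduceMod_mem_quaternaryLift_iff.mpr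
    ⟨0, t, reduceMod_mem_dualCode_rowCode_iff.mpr ht, by rw [Matrix.zero_vecMul, zero_add]⟩

theorem isOddLattice_lattice37 : IsOddLattice lattice37 := by
  obtain ⟨y, hy, hy_norm⟩ := exists_mem_lattice37_normOf_eq_three
  exact ⟨y, hy, 3, by decide, by rw [hy_norm, Int.cast_ofNat]⟩

theorem hasMinNorm_lattice37 : HasMinNorm lattice37 3 := by
  obtain ⟨y, hy, hy_norm⟩ := exists_mem_lattice37_normOf_eq_three
  have hy0 : y ≠ 0 := by
    rintro rfl
    simp [normOf] at hy_norm
  refine ⟨⟨y, hy, hy0, hy_norm⟩, ?_⟩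
  rintro _ ⟨x, hx, hx0, rfl⟩
  exact three_le_normOf_of_mem_lattice37 hx hx0

theorem scaledVec_shadowVec_mem_shadow_lattice37 :
    scaledVec 4 shadowVec ∈ shadow lattice37 := by
  have hres : reduceMod 2 shadowVec - 1 = reduceMod 2 (generatorMatrix 0) := by decide +kernel
  refine scaledVec_mem_shadow_constructionA_quaternaryLift rowCode_generatorMatrix_le_dualCode
    isOddLattice_lattice37 (by decide +kernel) ?_
  exact hres ▸ reduceMod_row_mem_rowCode 2 generatorMatrix 0

theorem normOf_scaledVec_shadowVec : normOf (scaledVec 4 shadowVec) = 21 / 4 := by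
  have h_dot : shadowVec ⬝ᵥ shadowVec = 21 := by decide +kernel
  rw [normOf_scaledVec, h_dot]
  norm_num

theorem seventeen_div_four_le_normOf_of_mem_shadow_lattice37 {s : EuclideanSpace ℝ (Fin 37)}
    (hs : s ∈ shadow lattice37) : 17 / 4 ≤ normOf s := by
  refine le_normOf_of_mem_shadow_constructionA (d := 17)
    (dualCode_quaternaryLift rowCode_generatorMatrix_le_dualCode) ?_ hs
  rw [residueCode_quaternaryLift]
  intro b hb
  obtain rfl | hb0 := eq_or_ne b 0
  · rw [hammingNorm_zero]
    norm_num
  · have := (hammingNorm_mem_Icc_of_mem_rowCode_generatorMatrix hb hb0).2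
    lia

theorem hasShadowMinNorm_lattice37 : HasShadowMinNorm lattice37 (21 / 4) := by
  rw [← normOf_scaledVec_shadowVec]
  refine isUnimodularLattice_lattice37.hasShadowMinNorm_of_mem_shadow
    scaledVec_shadowVec_mem_shadow_lattice37 fun s hs => ?_
  have := seventeen_div_four_le_normOf_of_mem_shadow_lattice37 hs
  rw [normOf_scaledVec_shadowVec]
  linarith

end Dim37

theorem exists_unimodular_dim37_min3_sigma21 :
    ∃ L : Set (EuclideanSpace ℝ (Fin 37)),
      IsUnimodularLattice L ∧ IsOddLattice L ∧ HasMinNorm L 3 ∧ HasSigma L 21 :=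
  ⟨lattice37, isUnimodularLattice_lattice37, isOddLattice_lattice37, hasMinNorm_lattice37,
    21 / 4, hasShadowMinNorm_lattice37, by norm_num⟩
end
end
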